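/- Let p be a prime and n ≥ 1, and let M be an analytic submanifold of ℚ_p^n. If some point of M is not very well multiplicatively approximable, then almost every point in a neighbourhood of that point in M (with respect to the smooth measure class on M) is not very well multiplicatively approximable. -/

import Mathlib

open MeasureTheory Metric
open scoped ENNReal NNReal

namespace PadicDioph

variable (p : ℕ) [Fact p.Prime]

noncomputable instance : MeasurableSpace ℚ_[p] := borel _
instance : BorelSpace ℚ_[p] := ⟨rfl⟩

/-- Membership in `ℤ[1/p]`, viewed inside `ℚ`. -/
def IsZInvP (q : ℚ) : Prop := ∃ (z : ℤ) (k : ℕ), q = (z : ℚ) / (p : ℚ) ^ k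

/-- Sup norm (max of archimedean absolute values) of a finite tuple of rationals. -/
noncomputable def supNormR {m : ℕ} (q : Fin m → ℚ) : ℝ := ⨆ i, |(q i : ℝ)|

/-- Sup of the `p`-adic absolute values of a finite tuple of rationals. -/
noncomputable def supNormP {m : ℕ} (q : Fin m → ℚ) : ℝ := ⨆ i, ‖((q i : ℚ_[p]))‖

/-- Sup norm of an integer tuple together with an extra integer coordinate. -/
noncomputable def supNormZ {n : ℕ} (q0 : ℤ) (q : Fin n → ℤ) : ℝ :=
  max |(q0 : ℝ)| (⨆ i, |((q i : ℤ) : ℝ)|)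

/-- The classical Diophantine exponent `w(y)` of `y ∈ ℚ_p^n`: the supremum of all `v > 0`
such that `|q₀ + q·y|_p ≤ ‖(q₀,q)‖_∞^{-v}` has infinitely many integer solutions. -/
noncomputable def wExp {n : ℕ} (y : Fin n → ℚ_[p]) : ℝ≥0∞ :=
  ⨆ (v : ℝ) (_ : 0 < v ∧
    {qq : ℤ × (Fin n → ℤ) |
      ‖((qq.1 : ℚ_[p]) + ∑ i, (qq.2 i : ℚ_[p]) * y i)‖ ≤
        (supNormZ qq.1 qq.2) ^ (-v)}.Infinite), ENNReal.ofReal v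

/-- `y` is very well approximable if `w(y) > n + 1`. -/
def IsVWA {n : ℕ} (y : Fin n → ℚ_[p]) : Prop :=
  ENNReal.ofReal ((n : ℝ) + 1) < wExp p y

/-- The defining condition of the exponent `w_p`: there are solutions
`q̃ = (q₀, q) ∈ ℤ[1/p]^{n+1}` of `|q·y + q₀|_p < (‖q‖_p ‖q̃‖_∞)^{-v} ‖q̃‖_∞^{-1}`
with `‖q‖_p ‖q̃‖_∞` arbitrarily large. -/
def WpCond {n : ℕ} (y : Fin n → ℚ_[p]) (v : ℝ) : Prop :=
  ∀ T : ℝ, ∃ (q0 : ℚ) (q : Fin n → ℚ),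
    IsZInvP p q0 ∧ (∀ i, IsZInvP p (q i)) ∧
    T < supNormP p q * supNormR (Fin.cons q0 q) ∧
    ‖(∑ i, (q i : ℚ_[p]) * y i) + (q0 : ℚ_[p])‖ <
      (supNormP p q * supNormR (Fin.cons q0 q)) ^ (-v) * (supNormR (Fin.cons q0 q))⁻¹

/-- The exponent `w_p(y)`. -/
noncomputable def wpExp {n : ℕ} (y : Fin n → ℚ_[p]) : ℝ≥0∞ :=
  ⨆ (v : ℝ) (_ : 0 < v ∧ WpCond p y v), ENNReal.ofReal v

/-- `Π_+` of a tuple of rationals: the product of `|q_i|_∞` over the nonzero coordinates. -/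
noncomputable def piPlusQ {m : ℕ} (q : Fin m → ℚ) : ℝ :=
  ∏ i, (if q i = 0 then 1 else |(q i : ℝ)|)

/-- `Π_+` of `(q₀, q)` with integer coordinates. -/
noncomputable def piPlusZ {n : ℕ} (q0 : ℤ) (q : Fin n → ℤ) : ℝ :=
  (if q0 = 0 then 1 else |(q0 : ℝ)|) * ∏ i, (if q i = 0 then 1 else |((q i : ℤ) : ℝ)|)

/-- `y ∈ ℚ_p^n` is very well multiplicatively approximable. -/
def IsVWMA {n : ℕ} (y : Fin n → ℚ_[p]) : Prop :=
  ∃ ε : ℝ, 0 < ε ∧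
    {qq : ℤ × (Fin n → ℤ) |
      ‖((qq.1 : ℚ_[p]) + ∑ i, (qq.2 i : ℚ_[p]) * y i)‖ ≤
        (piPlusZ qq.1 qq.2) ^ (-(1 + ε))}.Infinite

/-- A measure on `ℚ_p^n` is strongly extremal if almost every point is not VWMA. -/
def StronglyExtremal {n : ℕ} (μ : Measure (Fin n → ℚ_[p])) : Prop :=
  ∀ᵐ y ∂μ, ¬ IsVWMA p y

/-- `δ(g_t u_y D^{n+1})` for the one-parameter flow: `g_t` has `p`-adic component
`diag(p^{-t},1,…,1)` and archimedean component `p^{-t/(n+1)}·Id`. -/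
noncomputable def deltaOne {n : ℕ} (y : Fin n → ℚ_[p]) (t : ℕ) : ℝ :=
  sInf { c : ℝ | ∃ qt : Fin (n + 1) → ℚ, (∀ i, IsZInvP p (qt i)) ∧ qt ≠ 0 ∧
    c = ((p : ℝ) ^ (-(t : ℝ) / ((n : ℝ) + 1)) * supNormR qt) *
        max (‖(((p : ℚ_[p]) ^ t)⁻¹ * ((qt 0 : ℚ_[p]) + ∑ i : Fin n, (qt i.succ : ℚ_[p]) * y i))‖)
            (⨆ i : Fin n, ‖((qt i.succ : ℚ_[p]))‖) }

/-- The exponent `γ(y)`. -/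
noncomputable def gammaExp {n : ℕ} (y : Fin n → ℚ_[p]) : ℝ :=
  sSup {c : ℝ | 0 ≤ c ∧ ∀ N : ℕ, ∃ t : ℕ, N ≤ t ∧
    deltaOne p y t ≤ (p : ℝ) ^ (-(c * (t : ℝ)))}

/-- `δ(g_t u_y D^{n+1})` for the multiparameter flow: for `t = (t₀,…,t_n)` with
`T = Σ tᵢ`, the `p`-adic component of `g_t` is `diag(p^{-T},1,…,1)` and the archimedean
component is `diag(p^{-t₀},…,p^{-t_n})`. -/
noncomputable def deltaMulti {n : ℕ} (y : Fin n → ℚ_[p]) (t : Fin (n + 1) → ℕ) : ℝ :=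
  sInf { c : ℝ | ∃ qt : Fin (n + 1) → ℚ, (∀ i, IsZInvP p (qt i)) ∧ qt ≠ 0 ∧
    c = (⨆ i, (p : ℝ) ^ (-((t i : ℝ))) * |(qt i : ℝ)|) *
        max (‖(((p : ℚ_[p]) ^ (∑ i, t i))⁻¹ *
              ((qt 0 : ℚ_[p]) + ∑ i : Fin n, (qt i.succ : ℚ_[p]) * y i))‖)
            (⨆ i : Fin n, ‖((qt i.succ : ℚ_[p]))‖) }

/-- The support of a measure on a metric space. -/
def measSupp {X : Type*} [MetricSpace X] [MeasurableSpace X] (μ : Measure X) : Set X :=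
  {x | ∀ r : ℝ, 0 < r → 0 < μ (ball x r)}

/-- `‖f‖_{μ,B}`. -/
noncomputable def muSupNorm {X : Type*} [MetricSpace X] [MeasurableSpace X]
    (μ : Measure X) (B : Set X) (f : X → ℚ_[p]) : ℝ :=
  sSup {c : ℝ | 0 < μ {x ∈ B | c < ‖f x‖}}

/-- `f` is `(C, α)`-good on `V` with respect to `μ`. -/
def IsGoodOn {X : Type*} [MetricSpace X] [MeasurableSpace X] (μ : Measure X)
    (C a : ℝ) (V : Set X) (f : X → ℚ_[p]) : Prop :=
  ∀ (x₀ : X) (r : ℝ), 0 < r → x₀ ∈ measSupp μ → ball x₀ r ⊆ V →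
    ∀ ε : ℝ, 0 < ε →
      μ {x ∈ ball x₀ r | ‖f x‖ < ε} ≤
        ENNReal.ofReal (C * (ε / muSupNorm p μ (ball x₀ r) f) ^ a) * μ (ball x₀ r)

/-- A metric space is Besicovitch: any family of balls whose centers exhaust a bounded
set `A` admits a countable subfamily covering `A` with multiplicity at most `N`. -/
def IsBesicovitch (X : Type*) [MetricSpace X] : Prop :=
  ∃ N : ℕ, ∀ (A : Set X), Bornology.IsBounded A →
    ∀ F : Set (X × ℝ), (∀ b ∈ F, 0 < b.2) → (∀ x ∈ A, ∃ r : ℝ, (x, r) ∈ F) →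
      ∃ S ⊆ F, S.Countable ∧ (∀ x ∈ A, ∃ b ∈ S, x ∈ ball b.1 b.2) ∧
        ∀ x : X, {b ∈ S | x ∈ ball b.1 b.2}.encard ≤ N

/-- `μ` is `D`-Federer on the open set `U`. -/
def IsDFedererOn {X : Type*} [MetricSpace X] [MeasurableSpace X]
    (μ : Measure X) (D : ℝ) (U : Set X) : Prop :=
  ∀ x ∈ measSupp μ, ∀ r : ℝ, 0 < r → ball x (3 * r) ⊆ U →
    μ (ball x (3 * r)) ≤ ENNReal.ofReal D * μ (ball x r)

/-- `μ` is Federer. -/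
def IsFederer {X : Type*} [MetricSpace X] [MeasurableSpace X] (μ : Measure X) : Prop :=
  ∀ᵐ x ∂μ, ∃ U : Set X, IsOpen U ∧ x ∈ U ∧ 0 < μ U ∧ ∃ D : ℝ, 0 < D ∧ IsDFedererOn μ D U

/-- The pair `(f, μ)` is good: `μ`-a.e. point has a neighbourhood `V` and `C, α > 0`
such that every affine combination `c₀ + Σ cᵢ fᵢ` is `(C, α)`-good on `V` w.r.t. `μ`. -/
def GoodPair {X : Type*} [MetricSpace X] [MeasurableSpace X] {n : ℕ}
    (f : X → (Fin n → ℚ_[p])) (μ : Measure X) : Prop :=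
  ∀ᵐ x ∂μ, ∃ V : Set X, IsOpen V ∧ x ∈ V ∧ ∃ C a : ℝ, 0 < C ∧ 0 < a ∧
    ∀ c0 : ℚ_[p], ∀ c : Fin n → ℚ_[p],
      IsGoodOn p μ C a V (fun x => c0 + ∑ i, c i * f x i)

/-- `(f, μ)` is nonplanar in the affine subspace `L`. -/
def NonplanarIn {X : Type*} [MetricSpace X] [MeasurableSpace X] {n : ℕ}
    (f : X → (Fin n → ℚ_[p])) (μ : Measure X)
    (L : AffineSubspace ℚ_[p] (Fin n → ℚ_[p])) : Prop :=
  ∀ B : Set X, IsOpen B → B.Nonempty → 0 < μ B →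
    affineSpan ℚ_[p] (f '' (B ∩ measSupp μ)) = L

/-- `f` is nondegenerate in the affine subspace `L` at `x`: `f` takes values in `L` and the
span of the partial derivatives of `f` at `x` up to some order is the linear part of `L`. -/
def NondegenerateAt {d n : ℕ} (f : (Fin d → ℚ_[p]) → (Fin n → ℚ_[p]))
    (L : AffineSubspace ℚ_[p] (Fin n → ℚ_[p])) (x : Fin d → ℚ_[p]) : Prop :=
  (∀ u, f u ∈ L) ∧ ∃ m : ℕ,
    Submodule.span ℚ_[p]
      {v : Fin n → ℚ_[p] | ∃ j : ℕ, j ≤ m ∧ 1 ≤ j ∧ ∃ vs : Fin j → (Fin d → ℚ_[p]),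
        v = iteratedFDeriv ℚ_[p] j f x vs} = L.direction

/-- An analytic chart of the `d`-dimensional submanifold `M` of `ℚ_p^n`: an analytic map
`f` on an open set `U`, injective on `U`, immersive, a homeomorphism onto its image, whose
image is a relatively open subset of `M`. -/
def IsChart (d n : ℕ) (M : Set (Fin n → ℚ_[p]))
    (U : Set (Fin d → ℚ_[p])) (f : (Fin d → ℚ_[p]) → (Fin n → ℚ_[p])) : Prop :=
  IsOpen U ∧ AnalyticOnNhd ℚ_[p] f U ∧ Set.InjOn f U ∧
  (∀ x ∈ U, Function.Injective (fderiv ℚ_[p] f x)) ∧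
  (∀ x ∈ U, ∀ V : Set (Fin d → ℚ_[p]), IsOpen V → x ∈ V →
      ∃ W : Set (Fin n → ℚ_[p]), IsOpen W ∧ f x ∈ W ∧ W ∩ f '' U ⊆ f '' (V ∩ U)) ∧
  ∃ W : Set (Fin n → ℚ_[p]), IsOpen W ∧ M ∩ W = f '' U

/-- `M` is a `d`-dimensional analytic submanifold of `ℚ_p^n`. -/
def IsAnalyticSubmanifold (d n : ℕ) (M : Set (Fin n → ℚ_[p])) : Prop :=
  M.Nonempty ∧ ∀ y ∈ M, ∃ (U : Set (Fin d → ℚ_[p])) (f : (Fin d → ℚ_[p]) → (Fin n → ℚ_[p])),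
    IsChart p d n M U f ∧ y ∈ f '' U

/-- Lagrange weights. -/
noncomputable def lagW {K : ℕ} (s0 : ℤ_[p]) (s : Fin K → ℤ_[p]) (i : Fin K) : ℚ_[p] :=
  ∏ l ∈ Finset.univ.erase i, (((s i : ℚ_[p]) - (s l : ℚ_[p]))⁻¹ * ((s0 : ℚ_[p]) - (s l : ℚ_[p])))

theorem lag_err {K : ℕ} (s0 : ℤ_[p]) (s : Fin K → ℤ_[p]) (hs : Function.Injective s)
    (P : Polynomial ℤ_[p]) :
    ∃ Q : Polynomial ℤ_[p], (P.degree < (K : WithBot ℕ) → Q = 0) ∧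
      ((P.eval s0 : ℤ_[p]) : ℚ_[p]) - ∑ i, lagW p s0 s i * ((P.eval (s i) : ℤ_[p]) : ℚ_[p])
        = ((Q.eval s0 * ∏ i, (s0 - s i) : ℤ_[p]) : ℚ_[p]) := by
  set D : Polynomial ℤ_[p] := ∏ i, (Polynomial.X - Polynomial.C (s i)) with hD
  have hDm : D.Monic := Polynomial.monic_prod_X_sub_C s Finset.univ
  have hDd : D.degree = (K : WithBot ℕ) := by
    rw [hD, Polynomial.degree_prod]; simp
  have hDe : ∀ x, D.eval x = ∏ i, (x - s i) := by
    intro x; rw [hD, Polynomial.eval_prod]; simp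
  refine ⟨P /ₘ D, ?_, ?_⟩
  · intro h; rw [Polynomial.divByMonic_eq_zero_iff hDm, hDd]; exact h
  · have key := Polynomial.modByMonic_add_div P D
    set r := P %ₘ D with hr
    have hrd : r.degree < (K : WithBot ℕ) := hDd ▸ Polynomial.degree_modByMonic_lt P hDm
    have e1 : ∀ x, P.eval x = r.eval x + (∏ i, (x - s i)) * (P /ₘ D).eval x := by
      intro x; rw [← hDe, ← Polynomial.eval_mul, ← Polynomial.eval_add, key]
    have e2 : ∀ i, P.eval (s i) = r.eval (s i) := by
      intro i; rw [e1, Finset.prod_eq_zero (Finset.mem_univ i) (sub_self _)]; simp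
    let φ : ℤ_[p] →+* ℚ_[p] := PadicInt.Coe.ringHom
    have hφ : ∀ x, φ x = (x : ℚ_[p]) := fun x => rfl
    have hinj : Set.InjOn (fun i => φ (s i)) (Finset.univ : Finset (Fin K)) := by
      intro i _ j _ h; exact hs (Subtype.coe_injective h)
    have hl := Lagrange.eq_interpolate (f := r.map φ) hinj (by
      refine lt_of_le_of_lt Polynomial.degree_map_le ?_
      simpa using hrd)
    have e3 : ((r.eval s0 : ℤ_[p]) : ℚ_[p]) =
        ∑ i, lagW p s0 s i * ((r.eval (s i) : ℤ_[p]) : ℚ_[p]) := by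
      have := congrArg (Polynomial.eval (φ s0)) hl
      rw [Polynomial.eval_map_apply, Lagrange.interpolate_apply, Polynomial.eval_finsetSum] at this
      rw [← hφ, this]
      refine Finset.sum_congr rfl fun i _ => ?_
      rw [Polynomial.eval_mul, Polynomial.eval_C, Polynomial.eval_map_apply, mul_comm]
      congr 1
      rw [Lagrange.basis, Polynomial.eval_prod, lagW]
      refine Finset.prod_congr rfl fun l _ => ?_
      simp [Lagrange.basisDivisor, hφ]
    simp_rw [e2]
    rw [← e3, e1 s0]
    push_cast
    ring

theorem lag_pow {K : ℕ} (s0 : ℤ_[p]) (s : Fin K → ℤ_[p]) (hs : Function.Injective s) (j : ℕ) :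
    (j < K → (s0 : ℚ_[p]) ^ j - ∑ i, lagW p s0 s i * (s i : ℚ_[p]) ^ j = 0) ∧
    ‖(s0 : ℚ_[p]) ^ j - ∑ i, lagW p s0 s i * (s i : ℚ_[p]) ^ j‖ ≤ 1 := by
  obtain ⟨Q, h1, h2⟩ := lag_err p s0 s hs (Polynomial.X ^ j)
  simp only [Polynomial.eval_pow, Polynomial.eval_X, PadicInt.coe_pow] at h2
  rw [h2]
  refine ⟨fun hj => ?_, PadicInt.norm_le_one _⟩
  rw [h1 (by rw [Polynomial.degree_X_pow]; exact_mod_cast hj)]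
  simp

/-- the interpolation error functional -/
noncomputable def lagE {K : ℕ} {V : Type*} [AddCommGroup V] [Module ℚ_[p] V]
    (s0 : ℤ_[p]) (s : Fin K → ℤ_[p]) (φ : ℚ_[p] → V) : V :=
  φ s0 - ∑ i, lagW p s0 s i • φ (s i)

theorem lagE_multilinear {K k d n : ℕ} (s0 : ℤ_[p]) (s : Fin K → ℤ_[p])
    (hs : Function.Injective s)
    (F : ContinuousMultilinearMap ℚ_[p] (fun _ : Fin k => (Fin d → ℚ_[p])) (Fin n → ℚ_[p]))
    (M R : ℝ) (hR : 0 < R) (hM : 0 ≤ M) (hF : ‖F‖ * R ^ k ≤ M) (z u : Fin d → ℚ_[p])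
    (hz : ‖z‖ ≤ R) (hu : ‖u‖ ≤ R) :
    ‖lagE p s0 s (fun t => F (fun _ => z + t • u))‖ ≤ M * (‖u‖ / R) ^ K := by
  classical
  have hexp : ∀ t : ℚ_[p], F (fun _ => z + t • u) =
      ∑ S : Finset (Fin k), t ^ S.card • F (S.piecewise (fun _ => u) (fun _ => z)) := by
    intro t
    have h1 := F.toMultilinearMap.map_add_univ (fun _ => t • u) (fun _ => z)
    have h0 : (fun _ : Fin k => z + t • u) = (fun _ => t • u) + (fun _ => z) := by
      funext i; simp [add_comm]
    rw [h0]
    refine h1.trans (Finset.sum_congr rfl fun S _ => ?_)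
    have h2 := F.toMultilinearMap.map_piecewise_smul (fun _ => t)
      (S.piecewise (fun _ => u) (fun _ => z)) S
    rw [Finset.prod_const] at h2
    refine Eq.trans ?_ h2
    congr 1
    funext i
    by_cases hi : i ∈ S <;> simp [hi]
  have hE : lagE p s0 s (fun t => F (fun _ => z + t • u)) =
      ∑ S : Finset (Fin k), ((s0 : ℚ_[p]) ^ S.card - ∑ i, lagW p s0 s i * (s i : ℚ_[p]) ^ S.card) •
        F (S.piecewise (fun _ => u) (fun _ => z)) := by
    simp only [lagE, hexp, sub_smul, Finset.sum_sub_distrib, Finset.sum_smul, Finset.smul_sum,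
      smul_smul]
    rw [Finset.sum_comm]
  rw [hE]
  have hq : ‖u‖ / R ≤ 1 := by rw [div_le_one hR]; exact hu
  have hq0 : 0 ≤ ‖u‖ / R := by positivity
  refine IsUltrametricDist.norm_sum_le_of_forall_le_of_nonneg (by positivity) fun S _ => ?_
  rw [norm_smul]
  obtain ⟨h1, h2⟩ := lag_pow p s0 s hs S.card
  by_cases hc : S.card < K
  · rw [h1 hc]; simp; positivity
  · push Not at hc
    have hb : ‖F (S.piecewise (fun _ => u) (fun _ => z))‖ ≤ ‖F‖ * (‖u‖ ^ S.card * R ^ (k - S.card)) := by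
      refine (F.le_opNorm _).trans ?_
      gcongr
      have : ∀ i, ‖S.piecewise (fun _ => u) (fun _ => z) i‖ ≤ S.piecewise (fun _ => ‖u‖) (fun _ => R) i := by
        intro i; by_cases hi : i ∈ S <;> simp [hi, hz]
      refine (Finset.prod_le_prod (fun _ _ => norm_nonneg _) (fun i _ => this i)).trans ?_
      rw [Finset.prod_piecewise]
      simp [Finset.card_sdiff]
    have hk : S.card ≤ k := by simpa using Finset.card_le_univ S
    calc _ ≤ 1 * (‖F‖ * (‖u‖ ^ S.card * R ^ (k - S.card))) := by gcongr
      _ = (‖F‖ * R ^ k) * (‖u‖ / R) ^ S.card := by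
        rw [← pow_sub_mul_pow R hk, div_pow]; field_simp
      _ ≤ M * (‖u‖ / R) ^ S.card := by gcongr
      _ ≤ M * (‖u‖ / R) ^ K := by gcongr ?_ * ?_; exact pow_le_pow_of_le_one hq0 hq hc

theorem lagE_hasSum {K d n : ℕ} (s0 : ℤ_[p]) (s : Fin K → ℤ_[p])
    (hs : Function.Injective s) (f : (Fin d → ℚ_[p]) → (Fin n → ℚ_[p])) (x0 : Fin d → ℚ_[p])
    (F : FormalMultilinearSeries ℚ_[p] (Fin d → ℚ_[p]) (Fin n → ℚ_[p]))
    (M R : ℝ) (hR : 0 < R) (hM : 0 ≤ M) (hF : ∀ k, ‖F k‖ * R ^ k ≤ M)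
    (hsum : ∀ z : Fin d → ℚ_[p], ‖z‖ ≤ R → HasSum (fun k => F k (fun _ => z)) (f (x0 + z)))
    (z u : Fin d → ℚ_[p])
    (hz : ‖z‖ ≤ R) (hu : ‖u‖ ≤ R) :
    ‖lagE p s0 s (fun t => f (x0 + z + t • u))‖ ≤ M * (‖u‖ / R) ^ K := by
  have hz' : ∀ t : ℤ_[p], ‖z + (t : ℚ_[p]) • u‖ ≤ R := by
    intro t
    refine (IsUltrametricDist.norm_add_le_max _ _).trans (max_le hz ?_)
    rw [norm_smul]
    calc _ ≤ 1 * ‖u‖ := by gcongr; exact PadicInt.norm_le_one t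
      _ ≤ R := by simpa using hu
  have h : HasSum (fun k => lagE p s0 s (fun t => F k (fun _ => z + t • u)))
      (lagE p s0 s (fun t => f (x0 + z + t • u))) := by
    simp only [lagE, add_assoc]
    refine (hsum _ (hz' s0)).sub (hasSum_sum fun i _ => ?_)
    exact (hsum _ (hz' (s i))).const_smul _
  have hcl : IsClosed (closedBall (0 : Fin n → ℚ_[p]) (M * (‖u‖ / R) ^ K)) := isClosed_closedBall
  have := hcl.mem_of_tendsto h (Filter.Eventually.of_forall fun S => by
    rw [mem_closedBall_zero_iff]
    refine IsUltrametricDist.norm_sum_le_of_forall_le_of_nonneg (by positivity) fun k _ => ?_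
    exact lagE_multilinear p s0 s hs (F k) M R hR hM (hF k) z u hz hu)
  simpa using this

/-- affine form -/
noncomputable def lf {n : ℕ} (c : Fin (n + 1) → ℚ_[p]) (y : Fin n → ℚ_[p]) : ℚ_[p] :=
  c 0 + ∑ i : Fin n, c i.succ * y i

theorem lagE_lf {K n : ℕ} (hK : 0 < K) (s0 : ℤ_[p]) (s : Fin K → ℤ_[p])
    (hs : Function.Injective s) (f : ℚ_[p] → (Fin n → ℚ_[p])) (c : Fin (n + 1) → ℚ_[p]) (B : ℝ)
    (hB : ‖lagE p s0 s f‖ ≤ B) :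
    ‖lagE p s0 s (fun t => lf p c (f t))‖ ≤ ‖c‖ * B := by
  have hB0 : 0 ≤ B := (norm_nonneg _).trans hB
  have h1 := (lag_pow p s0 s hs 0).1 hK
  simp only [pow_zero, mul_one] at h1
  have : lagE p s0 s (fun t => lf p c (f t)) = ∑ i : Fin n, c i.succ * lagE p s0 s f i := by
    have e : ∀ i, lagE p s0 s f i = f s0 i - ∑ l, lagW p s0 s l * f (s l) i := by
      intro i; simp [lagE]
    simp only [e]
    simp only [lagE, lf, smul_eq_mul, mul_add, Finset.sum_add_distrib, ← Finset.sum_mul,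
      mul_sub, Finset.sum_sub_distrib, Finset.mul_sum]
    have h2 : ∑ i, lagW p s0 s i = 1 := (sub_eq_zero.mp h1).symm
    rw [h2, Finset.sum_comm]
    have : ∀ x y, lagW p s0 s x * (c (Fin.succ y) * f (s x) y) = c (Fin.succ y) * (lagW p s0 s x * f (s x) y) := by
      intros; ring
    simp only [this]; ring
  rw [this]
  refine IsUltrametricDist.norm_sum_le_of_forall_le_of_nonneg (by positivity) fun i _ => ?_
  rw [norm_mul]
  gcongr
  · exact norm_le_pi_norm c _
  · exact (norm_le_pi_norm _ i).trans hB

/-- balls -/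
def bb {d : ℕ} (x : Fin d → ℚ_[p]) (j : ℕ) : Set (Fin d → ℚ_[p]) := closedBall x ((p : ℝ)⁻¹ ^ j)

theorem q_pos : (0 : ℝ) < (p : ℝ)⁻¹ := by
  have := (Fact.out : p.Prime).pos
  positivity

theorem q_lt_one : (p : ℝ)⁻¹ < 1 := by
  have := (Fact.out : p.Prime).one_lt
  exact inv_lt_one_of_one_lt₀ (by exact_mod_cast this)

theorem mem_bb {d : ℕ} (x y : Fin d → ℚ_[p]) (j : ℕ) :
    y ∈ bb p x j ↔ ‖y - x‖ ≤ (p : ℝ)⁻¹ ^ j := by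
  rw [bb, mem_closedBall, dist_eq_norm]

theorem self_mem_bb {d : ℕ} (x : Fin d → ℚ_[p]) (j : ℕ) : x ∈ bb p x j := by
  rw [mem_bb]; simp

theorem bb_eq {d : ℕ} {x y : Fin d → ℚ_[p]} {j : ℕ} (h : y ∈ bb p x j) : bb p x j = bb p y j :=
  IsUltrametricDist.closedBall_eq_of_mem h

theorem bb_mono {d : ℕ} (x : Fin d → ℚ_[p]) {i j : ℕ} (h : i ≤ j) : bb p x j ⊆ bb p x i :=
  closedBall_subset_closedBall (pow_le_pow_of_le_one (q_pos p).le (q_lt_one p).le h)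

theorem bb_subset {d : ℕ} {x y : Fin d → ℚ_[p]} {i j : ℕ} (h : y ∈ bb p x i) (hij : i ≤ j) :
    bb p y j ⊆ bb p x i := by
  rw [bb_eq p h]; exact bb_mono p y hij

theorem bb_open {d : ℕ} (x : Fin d → ℚ_[p]) (j : ℕ) : IsOpen (bb p x j) :=
  IsUltrametricDist.isOpen_closedBall x (pow_pos (q_pos p) j).ne'

theorem exists_bb_subset {d : ℕ} {x : Fin d → ℚ_[p]} {U : Set (Fin d → ℚ_[p])} (hU : IsOpen U)
    (hx : x ∈ U) : ∃ j, bb p x j ⊆ U := by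
  obtain ⟨r, hr, h⟩ := Metric.isOpen_iff.1 hU x hx
  obtain ⟨j, hj⟩ := exists_pow_lt_of_lt_one hr (q_lt_one p)
  exact ⟨j, (closedBall_subset_ball hj).trans h⟩

theorem one_le_abs_mul_norm (z : ℤ) (hz : z ≠ 0) : 1 ≤ |(z : ℝ)| * ‖(z : ℚ_[p])‖ := by
  have hp := (Fact.out : p.Prime)
  have hz' : (z : ℚ_[p]) ≠ 0 := by exact_mod_cast hz
  have h1 : ‖(z : ℚ_[p])‖ = (p : ℝ) ^ (-(padicValInt p z : ℤ)) := by
    rw [Padic.norm_eq_zpow_neg_valuation hz', Padic.valuation_intCast]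
  have h2 : (p ^ padicValInt p z : ℤ) ∣ z := padicValInt_dvd z
  have h3 : ((p : ℝ) ^ padicValInt p z) ≤ |(z : ℝ)| := by
    have := Int.le_of_dvd (abs_pos.2 hz) ((dvd_abs _ _).2 h2)
    exact_mod_cast this
  rw [h1, zpow_neg, zpow_natCast]
  have h4 : (0 : ℝ) < (p : ℝ) ^ padicValInt p z := by
    have := hp.pos
    positivity
  rw [← div_eq_mul_inv, le_div_iff₀ h4, one_mul]
  exact h3

theorem analytic_interp {d n : ℕ} {U : Set (Fin d → ℚ_[p])}
    {f : (Fin d → ℚ_[p]) → (Fin n → ℚ_[p])} (hU : IsOpen U)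
    (x0 : Fin d → ℚ_[p]) (hx0 : x0 ∈ U) (hf : AnalyticAt ℚ_[p] f x0) :
    ∃ (J : ℕ) (M : ℝ), 0 ≤ M ∧ bb p x0 J ⊆ U ∧
      ∀ (K : ℕ), 0 < K → ∀ (s0 : ℤ_[p]) (s : Fin K → ℤ_[p]), Function.Injective s →
        ∀ x u : Fin d → ℚ_[p], x ∈ bb p x0 J → ‖u‖ ≤ (p : ℝ)⁻¹ ^ J → ∀ c : Fin (n + 1) → ℚ_[p],
        ‖lagE p s0 s (fun t => lf p c (f (x + t • u)))‖ ≤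
          ‖c‖ * (M * (‖u‖ / (p : ℝ)⁻¹ ^ J) ^ K) := by
  obtain ⟨F, r, hF⟩ := hf
  obtain ⟨j1, hj1⟩ := exists_bb_subset p hU hx0
  obtain ⟨r', hr'0, hr'⟩ := ENNReal.lt_iff_exists_nnreal_btwn.1 hF.r_pos
  have hr'0 : (0 : ℝ) < r' := by exact_mod_cast hr'0
  obtain ⟨j2, hj2⟩ := exists_pow_lt_of_lt_one hr'0 (q_lt_one p)
  set J := max j1 j2
  have hJ : (p : ℝ)⁻¹ ^ J ≤ r' :=
    (pow_le_pow_of_le_one (q_pos p).le (q_lt_one p).le (le_max_right j1 j2)).trans hj2.le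
  obtain ⟨M, hM, hMb⟩ := F.norm_mul_pow_le_of_lt_radius (hr'.trans_le hF.r_le)
  have hR : 0 < (p : ℝ)⁻¹ ^ J := pow_pos (q_pos p) J
  refine ⟨J, M, hM.le, (bb_mono p x0 (le_max_left _ _)).trans hj1, ?_⟩
  intro K hK s0 s hs x u hx hu c
  refine lagE_lf p hK s0 s hs _ c _ ?_
  rw [mem_bb] at hx
  have := lagE_hasSum p s0 s hs f x0 F M _ hR hM.le (fun k => ?_) (fun z hz => ?_) (x - x0) u hx hu
  · simpa using this
  · refine le_trans ?_ (hMb k)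
    gcongr
  · refine hF.hasSum ?_
    rw [Metric.mem_eball, edist_zero_right]
    refine lt_of_le_of_lt ?_ hr'
    rw [← ofReal_norm, ENNReal.ofReal_le_iff_le_toReal ENNReal.coe_ne_top]
    exact hz.trans hJ

theorem finite_dim_lemma {d n : ℕ} {f : (Fin d → ℚ_[p]) → (Fin n → ℚ_[p])}
    (S : Set (Fin d → ℚ_[p])) (hS : IsCompact S) (hf : ContinuousOn f S) :
    ∃ κ : ℝ, 0 ≤ κ ∧ ∀ c : Fin (n + 1) → ℚ_[p], ∃ c' : Fin (n + 1) → ℚ_[p],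
      (∀ x ∈ S, lf p c' (f x) = lf p c (f x)) ∧
      ∀ N : ℝ, 0 ≤ N → (∀ x ∈ S, ‖lf p c (f x)‖ ≤ N) → ‖c'‖ ≤ κ * N := by
  have : CompactSpace S := isCompact_iff_compactSpace.1 hS
  have hc : ∀ i, Continuous (fun x : S => f x i) := fun i =>
    (continuous_apply i).comp (continuousOn_iff_continuous_domRestrict.1 hf)
  let T : (Fin (n + 1) → ℚ_[p]) →ₗ[ℚ_[p]] C(S, ℚ_[p]) :=
    { toFun := fun c => ⟨fun x => lf p c (f x), by
        unfold lf
        exact continuous_const.add (continuous_finsetSum _ fun i _ => continuous_const.mul (hc i))⟩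
      map_add' := by
        intro a b; ext x
        simp [lf, add_mul, Finset.sum_add_distrib]; ring
      map_smul' := by
        intro a b; ext x
        simp [lf, mul_add, Finset.mul_sum, mul_assoc] }
  obtain ⟨g, hg⟩ := T.rangeRestrict.exists_rightInverse_of_surjective T.range_rangeRestrict
  let G := LinearMap.toContinuousLinearMap g
  refine ⟨‖G‖, G.opNorm_nonneg, fun c => ⟨g (T.rangeRestrict c), ?_, ?_⟩⟩
  · intro x hx
    have h1 : T.rangeRestrict (g (T.rangeRestrict c)) = T.rangeRestrict c :=
      LinearMap.congr_fun hg _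
    have h2 : T (g (T.rangeRestrict c)) = T c := congrArg Subtype.val h1
    exact congrArg (fun h : C(S, ℚ_[p]) => h ⟨x, hx⟩) h2
  · intro N hN h
    refine (G.le_opNorm (T.rangeRestrict c)).trans ?_
    gcongr
    exact (ContinuousMap.norm_le _ hN).2 fun x => h x x.2

theorem lagW_norm_le {K : ℕ} (e : ℕ) (i : Fin K) :
    ‖lagW p 1 (fun l : Fin K => (p : ℤ_[p]) ^ e * (l : ℕ)) i‖ ≤ ((p : ℝ) ^ e * K) ^ (K - 1) := by
  have hp := (Fact.out : p.Prime)
  rw [lagW, norm_prod]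
  have hcard : (Finset.univ.erase i).card = K - 1 := by simp
  rw [← hcard, ← Finset.prod_const]
  refine Finset.prod_le_prod (fun _ _ => norm_nonneg _) fun l hl => ?_
  have hli : l ≠ i := Finset.ne_of_mem_erase hl
  rw [norm_mul, norm_inv]
  have h1 : ‖((1 : ℤ_[p]) : ℚ_[p]) - (((p : ℤ_[p]) ^ e * (l : ℕ) : ℤ_[p]) : ℚ_[p])‖ ≤ 1 := by
    rw [← PadicInt.coe_sub]; exact PadicInt.norm_le_one _
  set z : ℤ := (i : ℕ) - (l : ℕ) with hz
  have hz0 : z ≠ 0 := by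
    rw [hz, sub_ne_zero]; intro h; apply hli; ext; exact_mod_cast h.symm
  have hzK : |(z : ℝ)| ≤ K := by
    have : |z| ≤ K := by rw [abs_le]; omega
    exact_mod_cast this
  have h2 : (((p : ℤ_[p]) ^ e * (i : ℕ) : ℤ_[p]) : ℚ_[p]) - (((p : ℤ_[p]) ^ e * (l : ℕ) : ℤ_[p]) : ℚ_[p])
      = (p : ℚ_[p]) ^ e * (z : ℚ_[p]) := by
    rw [hz]; push_cast; ring
  rw [h2, norm_mul, norm_pow, Padic.norm_p, mul_inv, inv_pow, inv_inv]
  have h3 := one_le_abs_mul_norm p z hz0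
  have h4 : 0 < ‖(z : ℚ_[p])‖ := by rw [norm_pos_iff]; exact_mod_cast hz0
  have h5 : ‖(z : ℚ_[p])‖⁻¹ ≤ K := by
    rw [inv_le_iff_one_le_mul₀ h4]
    exact h3.trans (by gcongr)
  calc _ ≤ ((p : ℝ) ^ e * K) * 1 := by gcongr
    _ = _ := mul_one _

theorem good_aux (K : ℕ) (hK : 0 < K) (P Q k κ N M : ℝ) :
    (P * k) ^ (K - 1) * ((κ * N) * (M * Q ^ K)) =
      (P * Q) ^ (K - 1) * (M * κ * k ^ (K - 1) * Q) * N := by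
  obtain ⟨e, rfl⟩ : ∃ e, K = e + 1 := ⟨K - 1, by omega⟩
  rw [Nat.add_sub_cancel, mul_pow, mul_pow, pow_succ]
  ring

theorem good_core {d n : ℕ} {U : Set (Fin d → ℚ_[p])}
    {f : (Fin d → ℚ_[p]) → (Fin n → ℚ_[p])} (hU : IsOpen U)
    (x0 : Fin d → ℚ_[p]) (hx0 : x0 ∈ U) (hf : AnalyticOnNhd ℚ_[p] f U) :
    ∃ (j0 K : ℕ), 0 < K ∧ bb p x0 j0 ⊆ U ∧
      ∀ (c : Fin (n + 1) → ℚ_[p]) (x : Fin d → ℚ_[p]) (j : ℕ), x ∈ bb p x0 j0 → j0 ≤ j →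
        ∀ y1 ∈ bb p x j, lf p c (f y1) ≠ 0 →
        ∃ x1 ∈ bb p x j, ‖lf p c (f y1)‖ ≤ ‖lf p c (f x1)‖ ∧
          ∀ u : Fin d → ℚ_[p], ‖u‖ ≤ (p : ℝ)⁻¹ ^ j → ∀ s : Fin K → ℤ_[p], Function.Injective s →
            ‖lagE p 0 s (fun t => lf p c (f (x1 + t • u)))‖ < ‖lf p c (f x1)‖ := by
  have hp := (Fact.out : p.Prime)
  have hp0 : (0 : ℝ) < p := by exact_mod_cast hp.pos
  obtain ⟨J, M, hM, hJU, hint⟩ := analytic_interp p hU x0 hx0 (hf x0 hx0)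
  set q : ℝ := (p : ℝ)⁻¹ with hq
  have hq0 : 0 < q := q_pos p
  have hq1 : q < 1 := q_lt_one p
  have hpq : (p : ℝ) * q = 1 := mul_inv_cancel₀ hp0.ne'
  have hB0U : bb p x0 (J + 1) ⊆ U := (bb_mono p x0 (Nat.le_succ J)).trans hJU
  have hfc : ContinuousOn f U := hf.continuousOn
  have hcomp : IsCompact (bb p x0 (J + 1)) := isCompact_closedBall _ _
  obtain ⟨κ, hκ, hfd⟩ := finite_dim_lemma p (bb p x0 (J + 1)) hcomp (hfc.mono hB0U)
  -- choose K
  obtain ⟨K0, hK0⟩ := exists_pow_lt_of_lt_one (show (0 : ℝ) < 1 / (M * κ + 1) by positivity) hq1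
  set K := K0 + 1 with hK
  have hMK : M * κ * q ^ K < 1 := by
    have : q ^ K ≤ q ^ K0 := pow_le_pow_of_le_one hq0.le hq1.le (Nat.le_succ _)
    have h2 : q ^ K < 1 / (M * κ + 1) := this.trans_lt hK0
    rw [lt_div_iff₀ (by positivity)] at h2
    have : 0 < q ^ K := by positivity
    nlinarith
  -- choose a0
  obtain ⟨a1, ha1⟩ := exists_pow_lt_of_lt_one
    (show (0 : ℝ) < 1 / (M * κ * (K : ℝ) ^ (K - 1) + 1) by positivity) hq1
  have haa : ∀ a, a1 ≤ a → M * κ * (K : ℝ) ^ (K - 1) * q ^ a < 1 := by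
    intro a ha
    have : q ^ a ≤ q ^ a1 := pow_le_pow_of_le_one hq0.le hq1.le ha
    have h2 : q ^ a < _ := this.trans_lt ha1
    rw [lt_div_iff₀ (by positivity)] at h2
    have : 0 < q ^ a := by positivity
    nlinarith
  refine ⟨J + 1 + a1, K, Nat.succ_pos _, (bb_mono p x0 (by omega)).trans hB0U, ?_⟩
  intro c0 x j hx hj y1 hy1 hne
  obtain ⟨c, hcc, hcN⟩ := hfd c0
  have hxB0 : x ∈ bb p x0 (J + 1) := bb_mono p x0 (by omega) hx
  have hxB : bb p x j ⊆ bb p x0 (J + 1) := bb_subset p hxB0 (by omega)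
  set g : (Fin d → ℚ_[p]) → ℚ_[p] := fun y => lf p c (f y) with hg
  have hgc : ContinuousOn (fun y => ‖g y‖) (bb p x0 (J + 1)) := by
    have h := hfc.mono hB0U
    have : Continuous (fun y => lf p c y) := by unfold lf; fun_prop
    exact (this.comp_continuousOn h).norm
  obtain ⟨xm, hxm, hmax⟩ := hcomp.exists_isMaxOn ⟨x0, self_mem_bb p x0 _⟩ hgc
  have hmax' : ∀ y ∈ bb p x0 (J + 1), ‖g y‖ ≤ ‖g xm‖ := fun y hy => hmax hy
  set N := ‖g xm‖ with hN
  have hcN' : ‖c‖ ≤ κ * N := hcN N (norm_nonneg _) (fun y hy => by rw [← hcc y hy]; exact hmax' y hy)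
  have hy1B := hxB hy1
  have hNpos : 0 < N := by
    refine lt_of_lt_of_le ?_ (hmax' y1 hy1B)
    rw [norm_pos_iff, hg]; simp only; rw [hcc y1 hy1B]; exact hne
  have hB0J : bb p x0 (J + 1) ⊆ bb p x0 J := bb_mono p x0 (Nat.le_succ J)
  -- extrapolation
  have hext : ∀ τ : ℝ, 0 ≤ τ → (∀ y ∈ bb p x j, ‖g y‖ ≤ τ) →
      N ≤ ((p : ℝ) ^ (j - (J + 1)) * K) ^ (K - 1) * τ := by
    intro τ hτ hb
    by_contra hcon
    push Not at hcon
    set e := j - (J + 1) with he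
    let s : Fin K → ℤ_[p] := fun l => (p : ℤ_[p]) ^ e * (l : ℕ)
    have hs : Function.Injective s := by
      intro a b hab
      have h0 : (p : ℤ_[p]) ^ e ≠ 0 := pow_ne_zero _ (by exact_mod_cast hp.ne_zero)
      have := mul_left_cancel₀ h0 hab
      ext; exact_mod_cast this
    set u := xm - x with hu
    have hun : ‖u‖ ≤ q ^ (J + 1) := by
      rw [← mem_bb, ← bb_eq p hxB0]; exact hxm
    have h1 := hint K (Nat.succ_pos _) 1 s hs x u (hB0J hxB0)
      (hun.trans (pow_le_pow_of_le_one hq0.le hq1.le (Nat.le_succ J))) c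
    have h2 : ‖c‖ * (M * (‖u‖ / q ^ J) ^ K) < N := by
      have : ‖u‖ / q ^ J ≤ q := by
        rw [div_le_iff₀ (by positivity)]; rw [pow_succ'] at hun; exact hun
      calc _ ≤ (κ * N) * (M * q ^ K) := by gcongr
        _ = (M * κ * q ^ K) * N := by ring
        _ < 1 * N := by gcongr
        _ = N := one_mul N
    have h3 : ‖∑ i, lagW p 1 s i • g (x + (s i : ℚ_[p]) • u)‖ < N := by
      refine lt_of_le_of_lt ?_ hcon
      refine IsUltrametricDist.norm_sum_le_of_forall_le_of_nonneg (by positivity) fun i _ => ?_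
      rw [norm_smul]
      gcongr
      · exact lagW_norm_le p e i
      · apply hb
        rw [mem_bb, add_sub_cancel_left, norm_smul]
        calc _ ≤ q ^ e * q ^ (J + 1) := by
              gcongr
              simp only [s, PadicInt.coe_mul, PadicInt.coe_pow, PadicInt.coe_natCast, norm_mul, norm_pow,
                Padic.norm_p]
              calc _ ≤ (p : ℝ)⁻¹ ^ e * 1 := by gcongr; exact by simpa using Padic.norm_int_le_one (p := p) ((i : ℕ) : ℤ)
                _ = _ := mul_one _
          _ = q ^ j := by rw [← pow_add]; congr 1; omega
    have h4 : g xm = lagE p 1 s (fun t => lf p c (f (x + t • u))) +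
        ∑ i, lagW p 1 s i • g (x + (s i : ℚ_[p]) • u) := by
      simp only [lagE, hg]
      rw [sub_add_cancel]
      congr 2
      simp [hu]
    have h5 : ‖g xm‖ < N := by
      rw [h4]
      exact (IsUltrametricDist.norm_add_le_max _ _).trans_lt (max_lt (h1.trans_lt h2) h3)
    exact lt_irrefl _ h5
  set τ := ‖c‖ * (M * (q ^ j / q ^ J) ^ K) with hτ
  have hτ0 : 0 ≤ τ := by positivity
  have hex : ∃ x'' ∈ bb p x j, τ < ‖g x''‖ := by
    by_contra hcon
    push Not at hcon
    have h1 := hext τ hτ0 hcon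
    obtain ⟨a, rfl⟩ : ∃ a, j = J + 1 + a := ⟨j - (J + 1), by omega⟩
    have ha : a1 ≤ a + 1 := by omega
    have h2 : q ^ (J + 1 + a) / q ^ J = q ^ (a + 1) := by
      rw [add_assoc, pow_add, mul_div_cancel_left₀ _ (by positivity), add_comm 1 a]
    rw [hτ, h2, Nat.add_sub_cancel_left] at h1
    have h3 : ((p : ℝ) ^ a * K) ^ (K - 1) * (‖c‖ * (M * (q ^ (a + 1)) ^ K)) ≤
        (M * κ * (K : ℝ) ^ (K - 1) * q ^ (a + 1)) * N := by
      calc _ ≤ ((p : ℝ) ^ (a + 1) * K) ^ (K - 1) * ((κ * N) * (M * (q ^ (a + 1)) ^ K)) := by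
            gcongr
            · exact_mod_cast hp.one_lt.le
            · omega
        _ = ((p * q) ^ (a + 1)) ^ (K - 1) * (M * κ * (K : ℝ) ^ (K - 1) * q ^ (a + 1)) * N := by
            rw [mul_pow (p : ℝ) q]
            exact good_aux K (Nat.succ_pos _) _ _ _ _ _ _
        _ = _ := by rw [hpq]; simp
    have h4 := haa (a + 1) ha
    nlinarith
  obtain ⟨x'', hx'', hτx⟩ := hex
  have hfin : ∃ x1 ∈ bb p x j, ‖g y1‖ ≤ ‖g x1‖ ∧ τ < ‖g x1‖ := by
    rcases le_total ‖g y1‖ ‖g x''‖ with h | h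
    · exact ⟨x'', hx'', h, hτx⟩
    · exact ⟨y1, hy1, le_rfl, hτx.trans_le h⟩
  obtain ⟨x1, hx1, hle, hτ1⟩ := hfin
  have hgg : ∀ y ∈ bb p x j, lf p c0 (f y) = g y := fun y hy => (hcc y (hxB hy)).symm
  refine ⟨x1, hx1, ?_, ?_⟩
  · rw [hgg _ hx1, hgg _ hy1]; exact hle
  · intro u hu s hs
    rw [hgg _ hx1]
    have hmem : ∀ t : ℤ_[p], x1 + (t : ℚ_[p]) • u ∈ bb p x j := by
      intro t
      rw [bb_eq p hx1, mem_bb, add_sub_cancel_left, norm_smul]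
      calc _ ≤ 1 * q ^ j := by gcongr; exact PadicInt.norm_le_one t
        _ = _ := one_mul _
    have h1 : lagE p 0 s (fun t => lf p c0 (f (x1 + t • u))) =
        lagE p 0 s (fun t => lf p c (f (x1 + t • u))) := by
      simp only [lagE]
      rw [hgg _ (hmem 0)]
      congr 1
      exact Finset.sum_congr rfl fun i _ => by rw [hgg _ (hmem (s i))]
    rw [h1]
    refine lt_of_le_of_lt ?_ hτ1
    refine (hint K (Nat.succ_pos _) 0 s hs x1 u (hB0J (hxB hx1))
      (hu.trans (pow_le_pow_of_le_one hq0.le hq1.le (by omega))) c).trans ?_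
    rw [hτ]
    gcongr

theorem bb_meas {d : ℕ} (x : Fin d → ℚ_[p]) (j : ℕ) : MeasurableSet (bb p x j) :=
  (bb_open p x j).measurableSet

theorem haar_scale {d : ℕ} (μ : Measure (Fin d → ℚ_[p])) [μ.IsAddHaarMeasure] (a : ℚ_[p])
    (ha : a ≠ 0) : ∃ c : ℝ≥0, ∀ S : Set (Fin d → ℚ_[p]), MeasurableSet S →
      μ ((fun x => a • x) ⁻¹' S) = c * μ S := by
  let e : (Fin d → ℚ_[p]) ≃L[ℚ_[p]] (Fin d → ℚ_[p]) :=
    ContinuousLinearEquiv.smulLeft (Units.mk0 a ha)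
  have he : ∀ x, e x = a • x := fun x => rfl
  have : (Measure.map e μ).IsAddHaarMeasure := e.isAddHaarMeasure_map μ
  have h := Measure.isAddLeftInvariant_eq_smul (Measure.map e μ) μ
  refine ⟨(Measure.map e μ).addHaarScalarFactor μ, fun S hS => ?_⟩
  have h2 := congrArg (fun ν : Measure _ => ν S) h
  change Measure.map e μ S = _ at h2
  rw [Measure.map_apply e.continuous.measurable hS] at h2
  exact h2

theorem bb_measure_pos {d : ℕ} (μ : Measure (Fin d → ℚ_[p])) [μ.IsAddHaarMeasure]
    (x : Fin d → ℚ_[p]) (j : ℕ) : μ (bb p x j) ≠ 0 :=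
  (bb_open p x j).measure_ne_zero μ ⟨x, self_mem_bb p x j⟩

theorem bb_measure_fin {d : ℕ} (μ : Measure (Fin d → ℚ_[p])) [μ.IsAddHaarMeasure]
    (x : Fin d → ℚ_[p]) (j : ℕ) : μ (bb p x j) ≠ ∞ :=
  (isCompact_closedBall x _).measure_ne_top

theorem bb_trans {d : ℕ} (μ : Measure (Fin d → ℚ_[p])) [μ.IsAddHaarMeasure]
    (x : Fin d → ℚ_[p]) (j : ℕ) : μ (bb p x j) = μ (bb p 0 j) := by
  rw [← measure_preimage_add μ x (bb p x j)]
  congr 1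
  ext y
  simp [mem_bb]

theorem haar_unit {d : ℕ} (μ : Measure (Fin d → ℚ_[p])) [μ.IsAddHaarMeasure] (a : ℚ_[p])
    (ha : ‖a‖ = 1) (S : Set (Fin d → ℚ_[p])) (hS : MeasurableSet S) :
      μ ((fun x => a • x) ⁻¹' S) = μ S := by
  obtain ⟨c, hc⟩ := haar_scale p μ a (by rw [← norm_pos_iff, ha]; exact one_pos)
  have h := hc (bb p 0 0) (bb_meas p _ _)
  have h1 : (fun x => a • x) ⁻¹' (bb p (0 : Fin d → ℚ_[p]) 0) = bb p 0 0 := by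
    ext y; simp [mem_bb, norm_smul, ha]
  rw [h1] at h
  have h2 : (c : ℝ≥0∞) = 1 := by
    have := (ENNReal.mul_eq_right (bb_measure_pos p μ 0 0) (bb_measure_fin p μ 0 0)).1 h.symm
    exact this
  rw [hc S hS, h2, one_mul]

theorem bb_doubling {d : ℕ} (μ : Measure (Fin d → ℚ_[p])) [μ.IsAddHaarMeasure] :
    ∃ D : ℝ≥0, ∀ (x : Fin d → ℚ_[p]) (j : ℕ), μ (bb p x j) ≤ D * μ (bb p x (j + 1)) := by
  have hp := (Fact.out : p.Prime)
  have hp0 : (0 : ℝ) < p := by exact_mod_cast hp.pos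
  obtain ⟨c, hc⟩ := haar_scale (d := d) p μ (p : ℚ_[p]) (by exact_mod_cast hp.ne_zero)
  refine ⟨c, fun x j => ?_⟩
  rw [bb_trans, bb_trans p μ x, ← hc _ (bb_meas p _ _)]
  apply measure_mono
  intro y hy
  rw [mem_bb, sub_zero] at hy
  rw [Set.mem_preimage, mem_bb, sub_zero, norm_smul, Padic.norm_p, pow_succ']
  gcongr

theorem lagW_zero_norm_le {K : ℕ} (L : ℕ) (s : Fin K → ℤ_[p])
    (hs : ∀ i j, i ≠ j → (p : ℝ)⁻¹ ^ L ≤ ‖s i - s j‖) (i : Fin K) :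
    ‖lagW p 0 s i‖ ≤ ((p : ℝ) ^ L) ^ K := by
  have hp1 : (1 : ℝ) ≤ p := by exact_mod_cast (Fact.out : p.Prime).one_lt.le
  have hcard : (Finset.univ.erase i).card = K - 1 := by simp
  have h0 : ‖lagW p 0 s i‖ ≤ ((p : ℝ) ^ L) ^ (K - 1) := by
    rw [lagW, norm_prod, ← hcard, ← Finset.prod_const]
    refine Finset.prod_le_prod (fun _ _ => norm_nonneg _) fun l hl => ?_
    have hli : l ≠ i := Finset.ne_of_mem_erase hl
    rw [norm_mul, norm_inv, ← PadicInt.coe_sub, ← PadicInt.coe_sub]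
    have h1 : ‖((0 - s l : ℤ_[p]) : ℚ_[p])‖ ≤ 1 := PadicInt.norm_le_one _
    have h2 := hs i l hli.symm
    have h3 : ‖((s i - s l : ℤ_[p]) : ℚ_[p])‖⁻¹ ≤ (p : ℝ) ^ L := by
      rw [PadicInt.norm_def] at h2
      have := inv_anti₀ (pow_pos (q_pos p) L) h2
      rwa [inv_pow, inv_inv] at this
    calc _ ≤ (p : ℝ) ^ L * 1 := by gcongr
      _ = _ := mul_one _
  refine h0.trans (pow_le_pow_right₀ (one_le_pow₀ hp1) (Nat.sub_le _ _))

theorem good_measure {d n : ℕ} {U : Set (Fin d → ℚ_[p])}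
    {f : (Fin d → ℚ_[p]) → (Fin n → ℚ_[p])} (hU : IsOpen U)
    (x0 : Fin d → ℚ_[p]) (hx0 : x0 ∈ U) (hf : AnalyticOnNhd ℚ_[p] f U) :
    ∃ (j0 K : ℕ), 0 < K ∧ bb p x0 j0 ⊆ U ∧
      ∀ (μ : Measure (Fin d → ℚ_[p])), μ.IsAddHaarMeasure →
      ∀ (c : Fin (n + 1) → ℚ_[p]) (x : Fin d → ℚ_[p]) (j : ℕ), x ∈ bb p x0 j0 → j0 ≤ j →
        ∀ y1 ∈ bb p x j, ∀ L : ℕ,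
          (p ^ L : ℕ) * μ {y ∈ bb p x j | ‖lf p c (f y)‖ < ((p : ℝ)⁻¹ ^ L) ^ K * ‖lf p c (f y1)‖} ≤
            K * μ (bb p x j) := by
  have hp := (Fact.out : p.Prime)
  have hp0 : (0 : ℝ) < p := by exact_mod_cast hp.pos
  obtain ⟨j0, K, hK, hsub, hcore⟩ := good_core p hU x0 hx0 hf
  refine ⟨j0, K, hK, hsub, ?_⟩
  intro μ hμ c x j hx hj y1 hy1 L
  by_cases hne : lf p c (f y1) = 0
  · have : {y ∈ bb p x j | ‖lf p c (f y)‖ < ((p : ℝ)⁻¹ ^ L) ^ K * ‖lf p c (f y1)‖} = ∅ := by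
      ext y; simp [hne]
    rw [this]; simp
  obtain ⟨x1, hx1, hle, hE⟩ := hcore c x j hx hj y1 hy1 hne
  set S := {y ∈ bb p x j | ‖lf p c (f y)‖ < ((p : ℝ)⁻¹ ^ L) ^ K * ‖lf p c (f y1)‖} with hS
  have hBU : bb p x j ⊆ U := (bb_subset p hx hj).trans hsub
  have hSm : MeasurableSet S := by
    have hc : ContinuousOn (fun y => ‖lf p c (f y)‖) (bb p x j) := by
      have : Continuous (fun y => lf p c y) := by unfold lf; fun_prop
      exact (this.comp_continuousOn (hf.continuousOn.mono hBU)).norm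
    exact (hc.isOpen_inter_preimage (bb_open p x j) isOpen_Iio).measurableSet
  let s : Fin (p ^ L) → ℤ_[p] := fun i => 1 + p * ((i : ℕ) : ℤ_[p])
  have hsunit : ∀ i, ‖((s i : ℤ_[p]) : ℚ_[p])‖ = 1 := by
    intro i
    have h1 : ‖((p : ℤ_[p]) * ((i : ℕ) : ℤ_[p]))‖ < 1 := by
      rw [norm_mul, PadicInt.norm_p]
      calc _ ≤ (p : ℝ)⁻¹ * 1 := by gcongr; exact PadicInt.norm_le_one _
        _ < 1 := by rw [mul_one]; exact q_lt_one p
    rw [← PadicInt.norm_def]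
    have := IsUltrametricDist.norm_add_eq_max_of_norm_ne_norm (x := (1 : ℤ_[p]))
      (y := (p : ℤ_[p]) * ((i : ℕ) : ℤ_[p])) (by rw [norm_one]; exact h1.ne')
    rw [this, norm_one, max_eq_left h1.le]
  have hsep : ∀ i j, i ≠ j → (p : ℝ)⁻¹ ^ L ≤ ‖s i - s j‖ := by
    intro i l hil
    by_contra hcon
    push Not at hcon
    have h0 : s i - s l = p * ((((i : ℕ) : ℤ) - ((l : ℕ) : ℤ) : ℤ) : ℤ_[p]) := by
      simp only [s]; push_cast; ring
    rw [h0, norm_mul, PadicInt.norm_p] at hcon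
    have h1 : ‖((((i : ℕ) : ℤ) - ((l : ℕ) : ℤ) : ℤ) : ℤ_[p])‖ ≤ (p : ℝ) ^ (-(L : ℤ)) := by
      rw [PadicInt.norm_le_pow_iff_norm_lt_pow_add_one, zpow_add₀ hp0.ne', zpow_neg, zpow_natCast, zpow_one,
        ← inv_pow]
      have := mul_lt_mul_of_pos_right hcon hp0
      rwa [mul_comm (p : ℝ)⁻¹, mul_assoc, inv_mul_cancel₀ hp0.ne', mul_one] at this
    rw [PadicInt.norm_int_le_pow_iff_dvd] at h1
    have h2 := Int.eq_zero_of_abs_lt_dvd h1 (by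
      have := i.2; have := l.2
      push_cast at *
      rw [abs_lt]
      constructor <;> [skip; skip] <;> (zify at *; linarith))
    exact hil (by ext; omega)
  have hsinj : Function.Injective s := by
    intro i l h
    by_contra hne
    have := hsep i l hne
    rw [h, sub_self, norm_zero] at this
    exact absurd this (not_le.2 (pow_pos (q_pos p) L))
  have hBx1 : bb p x j = bb p x1 j := bb_eq p hx1
  -- counting
  have hcount : ∀ u ∈ bb p (0 : Fin d → ℚ_[p]) j,
      ∑ i, ((fun u => x1 + (s i : ℚ_[p]) • u) ⁻¹' S).indicator (fun _ => (1 : ℝ≥0∞)) u ≤ K := by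
    intro u hu
    rw [mem_bb, sub_zero] at hu
    classical
    have h1 : ∑ i, ((fun u => x1 + (s i : ℚ_[p]) • u) ⁻¹' S).indicator (fun _ => (1 : ℝ≥0∞)) u =
        ((Finset.univ.filter fun i => x1 + (s i : ℚ_[p]) • u ∈ S).card : ℝ≥0∞) := by
      rw [Finset.card_filter]
      push_cast
      refine Finset.sum_congr rfl fun i _ => ?_
      simp [Set.indicator_apply]
    rw [h1]
    by_contra hcon
    push Not at hcon
    have hcon' : K ≤ (Finset.univ.filter fun i => x1 + (s i : ℚ_[p]) • u ∈ S).card := by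
      exact_mod_cast hcon.le
    obtain ⟨A, hA, hAc⟩ := Finset.exists_subset_card_eq hcon'
    let e := A.equivFinOfCardEq hAc
    let σ : Fin K → ℤ_[p] := fun i => s (e.symm i)
    have hσS : ∀ i, x1 + (σ i : ℚ_[p]) • u ∈ S := fun i =>
      (Finset.mem_filter.1 (hA (e.symm i).2)).2
    have hσne : ∀ i l, i ≠ l → (e.symm i : Fin (p ^ L)) ≠ e.symm l := fun i l h h' =>
      h (e.symm.injective (Subtype.ext h'))
    have hσinj : Function.Injective σ := by
      intro i l h
      exact e.symm.injective (Subtype.ext (hsinj h))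
    have h2 := hE u hu σ hσinj
    have h3 : ‖∑ i, lagW p 0 σ i • lf p c (f (x1 + (σ i : ℚ_[p]) • u))‖ < ‖lf p c (f x1)‖ := by
      have hpos : 0 < ‖lf p c (f x1)‖ := (norm_pos_iff.2 hne).trans_le hle
      have : ∀ i : Fin K, ‖lagW p 0 σ i • lf p c (f (x1 + (σ i : ℚ_[p]) • u))‖ < ‖lf p c (f x1)‖ := by
        intro i
        rw [norm_smul]
        have h4 := (hσS i).2
        have h5 := lagW_zero_norm_le p L σ (fun i l h => hsep _ _ (hσne i l h)) i
        calc _ ≤ ((p : ℝ) ^ L) ^ K * ‖lf p c (f (x1 + (σ i : ℚ_[p]) • u))‖ := by gcongr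
          _ < ((p : ℝ) ^ L) ^ K * (((p : ℝ)⁻¹ ^ L) ^ K * ‖lf p c (f y1)‖) := by gcongr
          _ = ‖lf p c (f y1)‖ := by
            rw [← mul_assoc, ← mul_pow, ← mul_pow, mul_inv_cancel₀ hp0.ne']; simp
          _ ≤ _ := hle
      obtain ⟨i, _, hi⟩ := IsUltrametricDist.exists_norm_finsetSum_le_of_nonempty
        (t := (Finset.univ : Finset (Fin K))) ⟨⟨0, hK⟩, Finset.mem_univ _⟩
        (fun i => lagW p 0 σ i • lf p c (f (x1 + (σ i : ℚ_[p]) • u)))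
      exact hi.trans_lt (this i)
    have h4 : lf p c (f x1) = lagE p 0 σ (fun t => lf p c (f (x1 + t • u))) +
        ∑ i, lagW p 0 σ i • lf p c (f (x1 + (σ i : ℚ_[p]) • u)) := by
      simp only [lagE]
      rw [sub_add_cancel]
      simp
    have h5 : ‖lf p c (f x1)‖ < ‖lf p c (f x1)‖ := by
      conv_lhs => rw [h4]
      exact (IsUltrametricDist.norm_add_le_max _ _).trans_lt (max_lt h2 h3)
    exact lt_irrefl _ h5
  have hpre : ∀ i, MeasurableSet ((fun u => x1 + (s i : ℚ_[p]) • u) ⁻¹' S) := fun i =>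
    (by fun_prop : Continuous fun u : Fin d → ℚ_[p] => x1 + (s i : ℚ_[p]) • u).measurable hSm
  have hmeas : ∀ i, μ ((fun u => x1 + (s i : ℚ_[p]) • u) ⁻¹' S) = μ S := by
    intro i
    have := haar_unit p μ (s i) (hsunit i) ((fun y => x1 + y) ⁻¹' S)
      ((measurable_const_add x1) hSm)
    rw [measure_preimage_add] at this
    exact this
  calc ((p ^ L : ℕ) : ℝ≥0∞) * μ S = ∑ i, μ ((fun u => x1 + (s i : ℚ_[p]) • u) ⁻¹' S) := by
        simp [hmeas]
    _ = ∫⁻ u, ∑ i, ((fun u => x1 + (s i : ℚ_[p]) • u) ⁻¹' S).indicator (fun _ => (1 : ℝ≥0∞)) u ∂μ := by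
        rw [lintegral_finsetSum _ (fun i _ => measurable_const.indicator (hpre i))]
        refine Finset.sum_congr rfl fun i _ => ?_
        rw [lintegral_indicator_const (hpre i), one_mul]
    _ ≤ ∫⁻ u, (bb p (0 : Fin d → ℚ_[p]) j).indicator (fun _ => (K : ℝ≥0∞)) u ∂μ := by
        refine lintegral_mono fun u => ?_
        by_cases hu : u ∈ bb p (0 : Fin d → ℚ_[p]) j
        · rw [Set.indicator_of_mem hu]; exact hcount u hu
        · rw [Set.indicator_of_notMem hu]
          refine le_of_eq (Finset.sum_eq_zero fun i _ => Set.indicator_of_notMem ?_ _)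
          intro h
          apply hu
          have h1 := h.1
          rw [hBx1, mem_bb, add_sub_cancel_left, norm_smul, hsunit, one_mul] at h1
          rw [mem_bb, sub_zero]; exact h1
    _ = K * μ (bb p x j) := by
        rw [lintegral_indicator_const (bb_meas p _ _), bb_trans p μ x]

def Marked {P X : Type*} [PartialOrder P] (ψ : P → X → ℝ) (ε ρ : ℝ) (P' : Set P) (y : X) : Prop :=
  ∃ F : Finset P, (F : Set P) ⊆ P' ∧ (∀ s ∈ F, ∀ r ∈ F, s ≤ r ∨ r ≤ s) ∧
    (∀ s ∈ F, ε ≤ ψ s y ∧ ψ s y < ρ) ∧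
    ∀ s ∈ P', s ∉ F → (∀ r ∈ F, s ≤ r ∨ r ≤ s) → ρ ≤ ψ s y

theorem Marked.insert {P X : Type*} [PartialOrder P] {ψ : P → X → ℝ} {ε ρ : ℝ} {P' : Set P} {y : X}
    {a : P} (ha : a ∈ P') (h1 : ε ≤ ψ a y) (h2 : ψ a y < ρ)
    (h : Marked ψ ε ρ {s ∈ P' | s < a ∨ a < s} y) : Marked ψ ε ρ P' y := by
  classical
  obtain ⟨F, hF, hc, hin, hout⟩ := h
  refine ⟨Insert.insert a F, ?_, ?_, ?_, ?_⟩
  · intro s hs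
    rcases Finset.mem_insert.1 hs with rfl | hs
    · exact ha
    · exact (hF hs).1
  · intro s hs r hr
    rcases Finset.mem_insert.1 hs with hsa | hs' <;> rcases Finset.mem_insert.1 hr with hra | hr'
    · left; rw [hsa, hra]
    · rw [hsa]; exact (hF hr').2.symm.imp le_of_lt le_of_lt
    · rw [hra]; exact (hF hs').2.imp le_of_lt le_of_lt
    · exact hc s hs' r hr'
  · intro s hs
    rcases Finset.mem_insert.1 hs with rfl | hs
    · exact ⟨h1, h2⟩
    · exact hin s hs
  · intro s hs hsn hcmp
    have hne : s ≠ a := fun h => hsn (h ▸ Finset.mem_insert_self _ _)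
    refine hout s ⟨hs, ?_⟩ (fun h => hsn (Finset.mem_insert_of_mem h))
      fun r hr => hcmp r (Finset.mem_insert_of_mem hr)
    exact (hcmp a (Finset.mem_insert_self _ _)).imp (fun h => lt_of_le_of_ne h hne)
      (fun h => lt_of_le_of_ne h hne.symm)

noncomputable def kmN (D : ℝ≥0∞) : ℕ → ℝ≥0∞
  | 0 => 0
  | k + 1 => D * (kmN D k + 1)

theorem kmN_ne_top {D : ℝ≥0∞} (hD : D ≠ ∞) (k : ℕ) : kmN D k ≠ ∞ := by
  induction k with
  | zero => simp [kmN]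
  | succ k ih => exact ENNReal.mul_ne_top hD (by simp [ih])

theorem km {P : Type*} [PartialOrder P] (rk : P → ℕ) (hrk : StrictMono rk) {d : ℕ}
    (μ : Measure (Fin d → ℚ_[p])) (D : ℝ≥0∞)
    (hD : ∀ (x : Fin d → ℚ_[p]) (j : ℕ), μ (bb p x j) ≤ D * μ (bb p x (j + 1)))
    (ψ : P → (Fin d → ℚ_[p]) → ℝ) (ε ρ : ℝ) (θ : ℝ≥0∞) (x0 : Fin d → ℚ_[p]) (j0 : ℕ)
    (hcont : ∀ s, ∀ x ∈ bb p x0 j0, ψ s x < ρ → ∃ j, ∀ y ∈ bb p x j, ψ s y < ρ)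
    (hgood : ∀ s, ∀ x ∈ bb p x0 j0, ∀ j, j0 ≤ j → (∃ y ∈ bb p x j, ρ ≤ ψ s y) →
      μ {y ∈ bb p x j | ψ s y < ε} ≤ θ * μ (bb p x j)) (k : ℕ) :
    ∀ R : Finset ℕ, R.card ≤ k → ∀ P' : Set P, (∀ s ∈ P', rk s ∈ R) →
      ∀ x ∈ bb p x0 j0, ∀ j, j0 ≤ j → (∀ s ∈ P', ∃ y ∈ bb p x j, ρ ≤ ψ s y) →
        μ {y ∈ bb p x j | ¬ Marked ψ ε ρ P' y} ≤ kmN D k * θ * μ (bb p x j) := by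
  classical
  induction k with
  | zero =>
    intro R hR P' hP x hx j hj h
    have hR' : R = ∅ := by simpa using hR
    have : {y ∈ bb p x j | ¬ Marked ψ ε ρ P' y} = ∅ := by
      ext y
      simp only [Set.mem_ofPred_eq, Set.mem_empty_iff_false, iff_false, not_and, not_not]
      intro _
      refine ⟨∅, by simp, by simp, by simp, fun s hs => ?_⟩
      have := hP s hs
      simp [hR'] at this
    rw [this]; simp
  | succ k ih =>
    intro R hR P' hP x hx j hj h
    let Q : (Fin d → ℚ_[p]) → ℕ → Prop := fun y i => ∃ s ∈ P', ∀ z ∈ bb p y i, ψ s z < ρ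
    let Bad : Set (Fin d → ℚ_[p]) := {y | y ∈ bb p x j ∧ ∃ i, Q y i}
    let i : (Fin d → ℚ_[p]) → ℕ := fun y => if h : ∃ i, Q y i then Nat.find h else 0
    have hi1 : ∀ y ∈ Bad, Q y (i y) := by
      intro y hy
      simp only [i, dif_pos hy.2]
      exact Nat.find_spec hy.2
    have hi2 : ∀ y ∈ Bad, ∀ l, Q y l → i y ≤ l := by
      intro y hy l hl
      simp only [i, dif_pos hy.2]
      exact Nat.find_min' hy.2 hl
    have hij : ∀ y ∈ Bad, j < i y := by
      intro y hy
      by_contra hcon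
      push Not at hcon
      obtain ⟨s, hs, hlt⟩ := hi1 y hy
      obtain ⟨z, hz, hz'⟩ := h s hs
      rw [bb_eq p hy.1] at hz
      exact absurd (hlt z (bb_mono p y hcon hz)) (not_lt.2 hz')
    have hsub : ∀ y ∈ Bad, bb p y (i y) ⊆ bb p x j := fun y hy => bb_subset p hy.1 (hij y hy).le
    have hself : ∀ y ∈ Bad, ∀ z ∈ bb p y (i y), z ∈ Bad ∧ bb p z (i z) = bb p y (i y) := by
      intro y hy z hz
      have he := bb_eq p hz
      have hzB : Q z (i y) := by
        obtain ⟨s, hs, hlt⟩ := hi1 y hy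
        exact ⟨s, hs, by rw [← he]; exact hlt⟩
      have hzBad : z ∈ Bad := ⟨hsub y hy hz, _, hzB⟩
      have hle := hi2 z hzBad _ hzB
      refine ⟨hzBad, ?_⟩
      have hyz : y ∈ bb p z (i z) := by
        apply bb_mono p z hle
        rw [← he]; exact self_mem_bb p _ _
      have he2 := bb_eq p hyz
      have : i y ≤ i z := by
        apply hi2 y hy
        obtain ⟨s, hs, hlt⟩ := hi1 z hzBad
        exact ⟨s, hs, by rw [← he2]; exact hlt⟩
      rw [he2, le_antisymm this hle]
    let 𝓕 : Set (Set (Fin d → ℚ_[p])) := (fun y => bb p y (i y)) '' Bad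
    have hdisj : 𝓕.PairwiseDisjoint id := by
      rintro _ ⟨y, hy, rfl⟩ _ ⟨z, hz, rfl⟩ hne
      rw [Function.onFun, id, id, Set.disjoint_left]
      intro w hw1 hw2
      apply hne
      simp only
      rw [← (hself y hy w hw1).2, ← (hself z hz w hw2).2]
    have hcount : 𝓕.Countable := by
      apply hdisj.countable_of_isOpen
      · rintro _ ⟨y, hy, rfl⟩
        exact bb_open p _ _
      · rintro _ ⟨y, hy, rfl⟩
        exact ⟨y, self_mem_bb p _ _⟩
    have hcover : {y ∈ bb p x j | ¬ Marked ψ ε ρ P' y} ⊆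
        ⋃ S ∈ 𝓕, {y ∈ S | ¬ Marked ψ ε ρ P' y} := by
      rintro y ⟨hy, hm⟩
      have : y ∈ Bad := by
        refine ⟨hy, ?_⟩
        by_contra hcon
        apply hm
        refine ⟨∅, by simp, by simp, by simp, fun s hs _ _ => ?_⟩
        by_contra hlt
        push Not at hlt
        obtain ⟨l, hl⟩ := hcont s y (bb_subset p hx hj hy) hlt
        exact hcon ⟨l, s, hs, hl⟩
      simp only [Set.mem_iUnion]
      exact ⟨_, ⟨y, this, rfl⟩, self_mem_bb p _ _, hm⟩
    have hball : ∀ S ∈ 𝓕, μ {y ∈ S | ¬ Marked ψ ε ρ P' y} ≤ kmN D (k + 1) * θ * μ S := by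
      rintro _ ⟨y, hy, rfl⟩
      simp only
      obtain ⟨a, ha, hlt⟩ := hi1 y hy
      have hpos := hij y hy
      obtain ⟨l, hl⟩ : ∃ l, i y = l + 1 := ⟨i y - 1, by omega⟩
      have hyB : y ∈ bb p x0 j0 := bb_subset p hx hj hy.1
      have hpar : ∀ s ∈ P', ∃ z ∈ bb p y l, ρ ≤ ψ s z := by
        intro s hs
        by_contra hcon
        push Not at hcon
        have := hi2 y hy l ⟨s, hs, hcon⟩
        omega
      have hjl : j0 ≤ l := by omega
      have h1 := hgood a y hyB l hjl (hpar a ha)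
      have h2 := ih (R.erase (rk a)) (by rw [Finset.card_erase_of_mem (hP a ha)]; omega)
        {s ∈ P' | s < a ∨ a < s} (by
          rintro s ⟨hs, hs'⟩
          refine Finset.mem_erase.2 ⟨?_, hP s hs⟩
          rcases hs' with h | h
          · exact (hrk h).ne
          · exact (hrk h).ne') y hyB l hjl (fun s hs => hpar s hs.1)
      have hsub2 : {z ∈ bb p y (i y) | ¬ Marked ψ ε ρ P' z} ⊆
          {z ∈ bb p y l | ¬ Marked ψ ε ρ {s ∈ P' | s < a ∨ a < s} z} ∪
            {z ∈ bb p y l | ψ a z < ε} := by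
        rintro z ⟨hz, hm⟩
        have hz' : z ∈ bb p y l := bb_mono p y (by omega) hz
        by_cases hε : ψ a z < ε
        · right; exact ⟨hz', hε⟩
        · left
          refine ⟨hz', fun hm' => hm (Marked.insert ha (not_lt.1 hε) (hlt z hz) hm')⟩
      calc _ ≤ _ := measure_mono hsub2
        _ ≤ _ := measure_union_le _ _
        _ ≤ kmN D k * θ * μ (bb p y l) + θ * μ (bb p y l) := add_le_add h2 h1
        _ = (kmN D k + 1) * θ * μ (bb p y l) := by ring
        _ ≤ (kmN D k + 1) * θ * (D * μ (bb p y (l + 1))) := by gcongr; exact hD _ _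
        _ = kmN D (k + 1) * θ * μ (bb p y (i y)) := by rw [hl, kmN]; ring
    have := hcount.to_subtype
    calc _ ≤ μ (⋃ S ∈ 𝓕, {y ∈ S | ¬ Marked ψ ε ρ P' y}) := measure_mono hcover
      _ ≤ ∑' S : 𝓕, μ {y ∈ (S : Set _) | ¬ Marked ψ ε ρ P' y} := measure_biUnion_le μ hcount _
      _ ≤ ∑' S : 𝓕, kmN D (k + 1) * θ * μ (S : Set _) := ENNReal.tsum_le_tsum fun S => hball S S.2
      _ = kmN D (k + 1) * θ * ∑' S : 𝓕, μ (S : Set _) := ENNReal.tsum_mul_left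
      _ = kmN D (k + 1) * θ * μ (⋃ S ∈ 𝓕, S) := by
        congr 1
        refine (measure_biUnion hcount hdisj ?_).symm
        rintro _ ⟨y, hy, rfl⟩
        exact bb_meas p _ _
      _ ≤ _ := by
        gcongr
        refine Set.iUnion₂_subset ?_
        rintro _ ⟨y, hy, rfl⟩
        exact hsub y hy

theorem exists_minor {m : ℕ} : ∀ {k : ℕ} (w : Fin k → Fin m → ℤ), LinearIndependent ℤ w →
    ∃ I : Fin k → Fin m, (Matrix.of fun i j => w j (I i)).det ≠ 0 := by
  intro k
  induction k with
  | zero => intro w _; exact ⟨Fin.elim0, by simp⟩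
  | succ k ih =>
    intro w hw
    obtain ⟨I, hI⟩ := ih (fun j => w j.succ) (hw.comp _ (Fin.succ_injective k))
    by_contra hcon
    push Not at hcon
    let c : Fin (k + 1) → ℤ := fun j => (-1) ^ (j : ℕ) *
      (Matrix.of fun i' j' => w (j.succAbove j') (I i')).det
    have h0 : ∑ j, c j • w j = 0 := by
      ext e
      have := hcon (Fin.cons e I)
      rw [Matrix.det_succ_row_zero] at this
      rw [Finset.sum_apply, Pi.zero_apply, ← this]
      refine Finset.sum_congr rfl fun j _ => ?_
      simp only [c, Pi.smul_apply, smul_eq_mul, Matrix.of_apply, Fin.cons_zero]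
      rw [mul_assoc, mul_assoc]
      congr 1
      rw [mul_comm]
      rfl
    have h1 := (Fintype.linearIndependent_iff.1 hw) c h0 0
    simp only [c, Fin.val_zero, pow_zero, one_mul, Fin.zero_succAbove] at h1
    exact hI h1

theorem minkowski_forms {k : ℕ} (A : Matrix (Fin k) (Fin k) ℝ) (hA : A.det ≠ 0) (s : ℝ) (hs : 0 < s)
    (h : |A.det| < s ^ k) : ∃ c : Fin k → ℤ, c ≠ 0 ∧ ∀ i, |∑ j, A i j * (c j : ℝ)| < s := by
  let L := Matrix.toLin' A
  have hL : LinearMap.det L = A.det := LinearMap.det_toLin' A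
  let S : Set (Fin k → ℝ) := L ⁻¹' (Metric.ball 0 s)
  let b := Pi.basisFun ℝ (Fin k)
  have hF := ZSpan.isAddFundamentalDomain' b (volume : Measure (Fin k → ℝ))
  have hvF : (volume : Measure (Fin k → ℝ)) (ZSpan.fundamentalDomain b) = 1 := by
    rw [ZSpan.fundamentalDomain_pi_basisFun, volume_pi, Measure.pi_pi]
    simp
  have hvS : (volume : Measure (Fin k → ℝ)) S = ENNReal.ofReal |A.det|⁻¹ * ENNReal.ofReal ((2 * s) ^ k) := by
    rw [Measure.addHaar_preimage_linearMap volume (by rw [hL]; exact hA), hL, abs_inv,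
      Real.volume_pi_ball _ hs]
    simp
  have hcount : Countable (Submodule.span ℤ (Set.range b)).toAddSubgroup := by
    change Countable (Submodule.span ℤ (Set.range b))
    infer_instance
  obtain ⟨x, hx0, hxS⟩ := exists_ne_zero_mem_lattice_of_measure_mul_two_pow_lt_measure
    (μ := (volume : Measure (Fin k → ℝ))) (s := S) hF
    (by
      intro x hx
      simp only [S, Set.mem_preimage, map_neg, mem_ball_zero_iff, norm_neg] at hx ⊢
      exact hx)
    ((convex_ball 0 s).linear_preimage L)
    (by
      rw [hvF, hvS, one_mul, Module.finrank_fin_fun, ← ENNReal.ofReal_mul (by positivity), mul_pow]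
      have h2 : (2 : ℝ≥0∞) ^ k = ENNReal.ofReal (2 ^ k) := by
        rw [ENNReal.ofReal_pow (by norm_num)]; norm_num
      rw [h2]
      apply (ENNReal.ofReal_lt_ofReal_iff_of_nonneg (by positivity)).2
      have hd : 0 < |A.det| := abs_pos.2 hA
      have : (1 : ℝ) < |A.det|⁻¹ * s ^ k := by
        rw [inv_mul_eq_div, lt_div_iff₀ hd, one_mul]; exact h
      calc (2 : ℝ) ^ k = 2 ^ k * 1 := (mul_one _).symm
        _ < 2 ^ k * (|A.det|⁻¹ * s ^ k) := by gcongr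
        _ = _ := by ring)
  have hmem : (x : Fin k → ℝ) ∈ Submodule.span ℤ (Set.range b) := x.2
  rw [Module.Basis.mem_span_iff_repr_mem] at hmem
  choose c hc using hmem
  have hc' : ∀ i, (c i : ℝ) = (x : Fin k → ℝ) i := by
    intro i
    have := hc i
    simpa [b] using this
  refine ⟨c, ?_, ?_⟩
  · rintro rfl
    apply hx0
    ext i
    rw [← hc' i]; simp
  · intro i
    have h1 : L x ∈ Metric.ball 0 s := hxS
    rw [mem_ball_zero_iff, pi_norm_lt_iff hs] at h1
    have := h1 i
    rw [Real.norm_eq_abs] at this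
    convert this using 2
    simp only [L, Matrix.toLin'_apply, Matrix.mulVec, dotProduct, hc']

noncomputable def minorM {k m : ℕ} (a : Fin m → ℝ) (w : Fin k → Fin m → ℤ) (I : Fin k → Fin m) :
    Matrix (Fin k) (Fin k) ℝ := Matrix.of fun i j => a (I i) * (w j (I i) : ℝ)

noncomputable def nu {k m : ℕ} (a : Fin m → ℝ) (w : Fin k → Fin m → ℤ) : ℝ :=
  ⨆ I : Fin k → Fin m, |(minorM a w I).det|

theorem le_nu {k m : ℕ} (a : Fin m → ℝ) (w : Fin k → Fin m → ℤ) (I : Fin k → Fin m) :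
    |(minorM a w I).det| ≤ nu a w :=
  le_ciSup (f := fun I => |(minorM a w I).det|) (Set.finite_range _).bddAbove I

theorem nu_nonneg {k m : ℕ} (a : Fin m → ℝ) (w : Fin k → Fin m → ℤ) : 0 ≤ nu a w :=
  Real.iSup_nonneg fun _ => abs_nonneg _

theorem exists_nu {k m : ℕ} (a : Fin m → ℝ) (w : Fin k → Fin m → ℤ) [Nonempty (Fin k → Fin m)] :
    ∃ I, |(minorM a w I).det| = nu a w :=
  exists_eq_ciSup_of_finite (f := fun I => |(minorM a w I).det|)

theorem nu_zero {m : ℕ} (a : Fin m → ℝ) (w : Fin 0 → Fin m → ℤ) : nu a w = 1 := by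
  simp [nu]

theorem nu_pos {k m : ℕ} (a : Fin m → ℝ) (ha : ∀ i, 0 < a i) (w : Fin k → Fin m → ℤ)
    (hw : LinearIndependent ℤ w) : 0 < nu a w := by
  obtain ⟨I, hI⟩ := exists_minor w hw
  refine lt_of_lt_of_le (abs_pos.2 ?_) (le_nu a w I)
  have h1 : (minorM a w I).det = (∏ i, a (I i)) *
      (((Matrix.of fun i j => w j (I i)).map (Int.castRingHom ℝ)).det) := by
    rw [← Matrix.det_mul_column]
    rfl
  have h2 : ((Matrix.of fun i j => w j (I i)).map (Int.castRingHom ℝ)).det =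
      (((Matrix.of fun i j => w j (I i)).det : ℤ) : ℝ) := by
    have := (Int.castRingHom ℝ).map_det (Matrix.of fun i j => w j (I i))
    exact this.symm
  rw [h1, h2]
  exact mul_ne_zero (Finset.prod_ne_zero_iff.2 fun i _ => (ha _).ne') (by exact_mod_cast hI)

theorem nu_mul {k m : ℕ} (a : Fin m → ℝ) (b w : Fin k → Fin m → ℤ) (A : Matrix (Fin k) (Fin k) ℤ)
    (h : ∀ i, w i = ∑ j, A i j • b j) : nu a w = |(A.det : ℝ)| * nu a b := by
  have : ∀ I, (minorM a w I).det = (minorM a b I).det * (A.det : ℝ) := by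
    intro I
    have h2 : (A.det : ℝ) = (A.map (Int.castRingHom ℝ)).transpose.det := by
      rw [Matrix.det_transpose]
      exact (Int.castRingHom ℝ).map_det A
    rw [h2, ← Matrix.det_mul]
    congr 1
    ext i j
    simp only [minorM, Matrix.of_apply, Matrix.mul_apply, Matrix.transpose_apply, Matrix.map_apply, h,
      Finset.sum_apply, Pi.smul_apply, smul_eq_mul]
    push_cast
    rw [Finset.mul_sum]
    refine Finset.sum_congr rfl fun l _ => ?_
    simp only [eq_intCast]; ring
  simp only [nu, this, abs_mul]
  rw [← Real.iSup_mul_of_nonneg (abs_nonneg _), mul_comm]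

theorem nu_cons {k m : ℕ} (a : Fin m → ℝ) (ha : ∀ i, 0 < a i) (b : Fin k → Fin m → ℤ)
    (v : Fin m → ℤ) (s : ℝ) (hs : ∀ i, a i * |(v i : ℝ)| ≤ s) (hs0 : 0 ≤ s) :
    nu a (Fin.cons v b : Fin (k + 1) → Fin m → ℤ) ≤ (k + 1) * s * nu a b := by
  refine Real.iSup_le (fun I => ?_) (by have := nu_nonneg a b; positivity)
  rw [Matrix.det_succ_column_zero]
  refine (Finset.abs_sum_le_sum_abs _ _).trans ?_
  have : ∀ i ∈ (Finset.univ : Finset (Fin (k + 1))),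
      |(-1) ^ (i : ℕ) * minorM a (Fin.cons v b : Fin (k + 1) → Fin m → ℤ) I i 0 *
        ((minorM a (Fin.cons v b : Fin (k + 1) → Fin m → ℤ) I).submatrix i.succAbove Fin.succ).det|
        ≤ s * nu a b := by
    intro i _
    rw [abs_mul, abs_mul, abs_pow, abs_neg, abs_one, one_pow, one_mul]
    gcongr
    · simp only [minorM, Matrix.of_apply, Fin.cons_zero]
      rw [abs_mul, abs_of_pos (ha _)]
      exact hs _
    · have : (minorM a (Fin.cons v b : Fin (k + 1) → Fin m → ℤ) I).submatrix i.succAbove Fin.succ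
          = minorM a b (I ∘ i.succAbove) := by
        ext i' j'
        simp [minorM]
      rw [this]
      exact le_nu _ _ _
  refine (Finset.sum_le_sum this).trans ?_
  simp
  linarith

theorem nu_minkowski {k m : ℕ} (a : Fin m → ℝ) (ha : ∀ i, 0 < a i) (w : Fin k → Fin m → ℤ)
    (hw : LinearIndependent ℤ w) (s : ℝ) (hs : 0 < s) (h : nu a w < s ^ k) :
    ∃ c : Fin k → ℤ, c ≠ 0 ∧ ∀ i, a i * |((∑ j, c j • w j) i : ℝ)| < k * s := by
  obtain ⟨I0, _⟩ := exists_minor w hw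
  have : Nonempty (Fin k → Fin m) := ⟨I0⟩
  obtain ⟨I, hI⟩ := exists_nu a w
  have hpos := nu_pos a ha w hw
  have hdet : (minorM a w I).det ≠ 0 := by
    rw [← abs_pos, hI]; exact hpos
  obtain ⟨c, hc0, hc⟩ := minkowski_forms (minorM a w I) hdet s hs (by rw [hI]; exact h)
  have hk : 0 < k := by
    rcases Nat.eq_zero_or_pos k with rfl | hk
    · exact absurd (Subsingleton.elim c 0) hc0
    · exact hk
  refine ⟨c, hc0, fun i => ?_⟩
  set M := minorM a w I with hM
  let R : Fin k → ℝ := fun j => a i * (w j i : ℝ)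
  let cr : Fin k → ℝ := fun j => (c j : ℝ)
  have h1 := Matrix.mulVec_cramer M.transpose R
  have h2 : M.det * (∑ j, R j * cr j) =
      ∑ r, Matrix.cramer M.transpose R r * (∑ j, M r j * (c j : ℝ)) := by
    have e1 : M.det * (∑ j, R j * cr j) = (M.transpose.mulVec (Matrix.cramer M.transpose R)) ⬝ᵥ cr := by
      rw [h1, Matrix.det_transpose]
      simp only [dotProduct, Pi.smul_apply, smul_eq_mul, Finset.mul_sum, mul_assoc]
    rw [e1, Matrix.mulVec_transpose, ← Matrix.dotProduct_mulVec]
    rfl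
  have h3 : ∀ r, |Matrix.cramer M.transpose R r| ≤ |M.det| := by
    intro r
    rw [Matrix.cramer_transpose_apply]
    have : M.updateRow r R = minorM a w (Function.update I r i) := by
      ext i' j'
      by_cases hi : i' = r
      · subst hi; simp [minorM, R]
      · simp [Matrix.updateRow_ne hi, minorM, hM, Function.update_of_ne hi]
    rw [this, hI]
    exact le_nu _ _ _
  have h4 : |M.det| * |∑ j, R j * cr j| < |M.det| * (k * s) := by
    rw [← abs_mul, h2]
    calc _ ≤ ∑ r, |Matrix.cramer M.transpose R r * (∑ j, M r j * (c j : ℝ))| :=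
          Finset.abs_sum_le_sum_abs _ _
      _ < ∑ r : Fin k, |M.det| * s := by
          apply Finset.sum_lt_sum_of_nonempty ⟨⟨0, hk⟩, Finset.mem_univ _⟩
          intro r _
          rw [abs_mul]
          exact mul_lt_mul_of_le_of_lt_of_nonneg_of_pos (h3 r) (hc r) (abs_nonneg _) (abs_pos.2 hdet)
      _ = _ := by simp; ring
  have h5 := lt_of_mul_lt_mul_left h4 (abs_nonneg _)
  have h6 : ∑ j, R j * cr j = a i * (((∑ j, c j • w j) i : ℤ) : ℝ) := by
    simp only [Finset.sum_apply, Pi.smul_apply, smul_eq_mul, R, cr]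
    push_cast
    rw [Finset.mul_sum]
    refine Finset.sum_congr rfl fun j _ => by ring
  rw [h6, abs_mul, abs_of_pos (ha i)] at h5
  exact h5

noncomputable def hgt {k m : ℕ} (T : ℕ) (ℓ : (Fin m → ℤ) →+ ℚ_[p]) (w : Fin k → Fin m → ℤ) : ℝ :=
  max 1 ((p : ℝ) ^ T * ⨆ j, ‖ℓ (w j)‖)

noncomputable def psi {k m : ℕ} (a : Fin m → ℝ) (T : ℕ) (ℓ : (Fin m → ℤ) →+ ℚ_[p])
    (w : Fin k → Fin m → ℤ) : ℝ := nu a w * hgt p T ℓ w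

theorem one_le_hgt {k m : ℕ} (T : ℕ) (ℓ : (Fin m → ℤ) →+ ℚ_[p]) (w : Fin k → Fin m → ℤ) :
    1 ≤ hgt p T ℓ w := le_max_left _ _

theorem le_hgt {k m : ℕ} (T : ℕ) (ℓ : (Fin m → ℤ) →+ ℚ_[p]) (w : Fin k → Fin m → ℤ) (j : Fin k) :
    (p : ℝ) ^ T * ‖ℓ (w j)‖ ≤ hgt p T ℓ w := by
  refine le_trans ?_ (le_max_right _ _)
  gcongr
  exact le_ciSup (f := fun j => ‖ℓ (w j)‖) (Set.finite_range _).bddAbove j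

theorem hgt_le {k m : ℕ} (T : ℕ) (ℓ : (Fin m → ℤ) →+ ℚ_[p]) (w : Fin k → Fin m → ℤ) (C : ℝ)
    (h1 : 1 ≤ C) (h : ∀ j, (p : ℝ) ^ T * ‖ℓ (w j)‖ ≤ C) : hgt p T ℓ w ≤ C := by
  refine max_le h1 ?_
  rw [Real.mul_iSup_of_nonneg (by positivity)]
  exact Real.iSup_le h (by linarith)

theorem hgt_cases {k m : ℕ} (T : ℕ) (ℓ : (Fin m → ℤ) →+ ℚ_[p]) (w : Fin k → Fin m → ℤ) :
    hgt p T ℓ w = 1 ∨ ∃ j, hgt p T ℓ w = (p : ℝ) ^ T * ‖ℓ (w j)‖ ∧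
      ∀ i, ‖ℓ (w i)‖ ≤ ‖ℓ (w j)‖ := by
  rcases Nat.eq_zero_or_pos k with rfl | hk
  · left; simp [hgt]
  have : Nonempty (Fin k) := ⟨⟨0, hk⟩⟩
  obtain ⟨j, hj⟩ := exists_eq_ciSup_of_finite (f := fun j => ‖ℓ (w j)‖)
  rcases le_total ((p : ℝ) ^ T * ⨆ j, ‖ℓ (w j)‖) 1 with h | h
  · left; exact max_eq_left h
  · right
    refine ⟨j, ?_, fun i => ?_⟩
    · rw [hgt, max_eq_right h, ← hj]
    · rw [hj]
      exact le_ciSup (f := fun j => ‖ℓ (w j)‖) (Set.finite_range _).bddAbove i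

theorem int_sum_norm_le {k : ℕ} (c : Fin k → ℤ) (β : Fin k → ℚ_[p]) (C : ℝ) (hC : 0 ≤ C)
    (h : ∀ i, ‖β i‖ ≤ C) : ‖∑ i, (c i : ℚ_[p]) * β i‖ ≤ C := by
  refine IsUltrametricDist.norm_sum_le_of_forall_le_of_nonneg hC fun i _ => ?_
  rw [norm_mul]
  calc _ ≤ 1 * C := by
        gcongr
        · exact Padic.norm_int_le_one _
        · exact h i
    _ = C := one_mul C

theorem map_comb {k m : ℕ} (ℓ : (Fin m → ℤ) →+ ℚ_[p]) (c : Fin k → ℤ) (b : Fin k → Fin m → ℤ) :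
    ℓ (∑ j, c j • b j) = ∑ j, (c j : ℚ_[p]) * ℓ (b j) := by
  rw [map_sum]
  refine Finset.sum_congr rfl fun j _ => ?_
  rw [map_zsmul, zsmul_eq_mul]

theorem psi_min {k m : ℕ} (a : Fin m → ℝ) (T : ℕ) (ℓ : (Fin m → ℤ) →+ ℚ_[p])
    (b w : Fin k → Fin m → ℤ) (A : Matrix (Fin k) (Fin k) ℤ)
    (h : ∀ i, w i = ∑ j, A i j • b j) (hw : LinearIndependent ℤ w) :
    psi p a T ℓ b ≤ psi p a T ℓ w := by
  have hdet : A.det ≠ 0 := by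
    intro h0
    obtain ⟨c, hc, hcA⟩ := Matrix.exists_vecMul_eq_zero_iff.2 h0
    apply hc
    have : ∑ i, c i • w i = 0 := by
      simp only [h, Finset.smul_sum, smul_smul]
      rw [Finset.sum_comm]
      refine Finset.sum_eq_zero fun j _ => ?_
      rw [← Finset.sum_smul]
      have : ∑ i, c i * A i j = 0 := congrFun hcA j
      rw [this, zero_smul]
    ext i
    exact (Fintype.linearIndependent_iff.1 hw) c this i
  have hp0 : (0 : ℝ) < (p : ℝ) ^ T := pow_pos (by exact_mod_cast (Fact.out : p.Prime).pos) T
  have hone := one_le_abs_mul_norm p A.det hdet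
  have hh : ‖((A.det : ℤ) : ℚ_[p])‖ * hgt p T ℓ b ≤ hgt p T ℓ w := by
    have hC := one_le_hgt p T ℓ w
    rcases hgt_cases p T ℓ b with h1 | ⟨j, h1, _⟩
    · rw [h1, mul_one]
      exact (Padic.norm_int_le_one _).trans hC
    · rw [h1]
      have e1 : A.det • b j = ∑ i, A.adjugate j i • w i := by
        simp only [h, Finset.smul_sum, smul_smul]
        rw [Finset.sum_comm]
        have : ∀ l, ∑ i, (A.adjugate j i * A i l) • b l = ((A.det • (1 : Matrix (Fin k) (Fin k) ℤ)) j l) • b l := by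
          intro l
          rw [← Finset.sum_smul, ← Matrix.adjugate_mul, Matrix.mul_apply]
        simp only [this]
        simp [Matrix.one_apply]
      have e2 := congrArg ℓ e1
      rw [map_comb, map_zsmul, zsmul_eq_mul] at e2
      have e3 : ‖((A.det : ℤ) : ℚ_[p]) * ℓ (b j)‖ ≤ hgt p T ℓ w / (p : ℝ) ^ T := by
        rw [e2]
        apply int_sum_norm_le p _ _ _ (by positivity)
        intro i
        rw [le_div_iff₀ hp0, mul_comm]
        exact le_hgt p T ℓ w i
      rw [norm_mul, le_div_iff₀ hp0] at e3
      linarith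
  rw [psi, psi, nu_mul a b w A h]
  have hnu := nu_nonneg a b
  have hb := one_le_hgt p T ℓ b
  calc nu a b * hgt p T ℓ b = 1 * (nu a b * hgt p T ℓ b) := (one_mul _).symm
    _ ≤ (|(A.det : ℝ)| * ‖((A.det : ℤ) : ℚ_[p])‖) * (nu a b * hgt p T ℓ b) := by gcongr
    _ = |(A.det : ℝ)| * nu a b * (‖((A.det : ℤ) : ℚ_[p])‖ * hgt p T ℓ b) := by ring
    _ ≤ _ := by gcongr

theorem psi_cons {k m : ℕ} (a : Fin m → ℝ) (ha : ∀ i, 0 < a i) (T : ℕ) (ℓ : (Fin m → ℤ) →+ ℚ_[p])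
    (b : Fin k → Fin m → ℤ) (v : Fin m → ℤ) (s : ℝ) (hs : ∀ i, a i * |(v i : ℝ)| ≤ s) (hs0 : 0 ≤ s)
    (hv : (p : ℝ) ^ T * ‖ℓ v‖ ≤ 1) :
    psi p a T ℓ (Fin.cons v b : Fin (k + 1) → Fin m → ℤ) ≤ (k + 1) * s * psi p a T ℓ b := by
  have h1 := nu_cons a ha b v s hs hs0
  have h2 : hgt p T ℓ (Fin.cons v b : Fin (k + 1) → Fin m → ℤ) ≤ hgt p T ℓ b := by
    apply hgt_le p T ℓ _ _ (one_le_hgt p T ℓ b)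
    intro j
    refine Fin.cases ?_ (fun j => ?_) j
    · rw [Fin.cons_zero]; exact hv.trans (one_le_hgt p T ℓ b)
    · rw [Fin.cons_succ]; exact le_hgt p T ℓ b j
  have := nu_nonneg a b
  have := nu_nonneg a (Fin.cons v b : Fin (k + 1) → Fin m → ℤ)
  have := one_le_hgt p T ℓ (Fin.cons v b : Fin (k + 1) → Fin m → ℤ)
  rw [psi, psi, ← mul_assoc]
  gcongr

theorem exists_int_near (z : ℚ_[p]) (hz : ‖z‖ ≤ 1) (e : ℕ) :
    ∃ r : ℤ, (p : ℝ) ^ e * ‖z + r‖ ≤ 1 := by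
  have hp0 : (0 : ℝ) < (p : ℝ) ^ e := pow_pos (by exact_mod_cast (Fact.out : p.Prime).pos) e
  obtain ⟨z', rfl⟩ : ∃ z' : ℤ_[p], (z' : ℚ_[p]) = z := ⟨⟨z, hz⟩, rfl⟩
  have h := PadicInt.appr_spec e z'
  rw [← PadicInt.norm_le_pow_iff_mem_span_pow] at h
  refine ⟨-((PadicInt.appr z' e : ℕ) : ℤ), ?_⟩
  rw [zpow_neg, zpow_natCast, PadicInt.norm_def] at h
  have h2 : ‖(z' : ℚ_[p]) + ((-((PadicInt.appr z' e : ℕ) : ℤ) : ℤ) : ℚ_[p])‖ ≤ ((p : ℝ) ^ e)⁻¹ := by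
    convert h using 2
    push_cast
    ring
  calc _ ≤ (p : ℝ) ^ e * ((p : ℝ) ^ e)⁻¹ := by gcongr
    _ = 1 := mul_inv_cancel₀ hp0.ne'

theorem exists_reduction {k m : ℕ} (T : ℕ) (ℓ : (Fin m → ℤ) →+ ℚ_[p]) (b : Fin k → Fin m → ℤ) :
    ∃ A : Matrix (Fin k) (Fin k) ℤ, |(A.det : ℝ)| = hgt p T ℓ b ∧
      ∀ i, (p : ℝ) ^ T * ‖ℓ (∑ j, A i j • b j)‖ ≤ 1 := by
  have hp := (Fact.out : p.Prime)
  have hp0 : (0 : ℝ) < (p : ℝ) := by exact_mod_cast hp.pos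
  have hp1 : (1 : ℝ) < (p : ℝ) := by exact_mod_cast hp.one_lt
  by_cases hle : hgt p T ℓ b ≤ 1
  · refine ⟨1, ?_, fun i => ?_⟩
    · rw [Matrix.det_one]; simp; exact le_antisymm (one_le_hgt p T ℓ b) hle
    · have : ∑ j, (1 : Matrix (Fin k) (Fin k) ℤ) i j • b j = b i := by simp [Matrix.one_apply]
      rw [this]
      exact (le_hgt p T ℓ b i).trans hle
  push Not at hle
  rcases hgt_cases p T ℓ b with h1 | ⟨j1, h1, hmax⟩
  · exact absurd h1 hle.ne'
  have hβ : ℓ (b j1) ≠ 0 := by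
    intro h0; rw [h1, h0] at hle; simp at hle; linarith
  have hβn : 0 < ‖ℓ (b j1)‖ := norm_pos_iff.2 hβ
  obtain ⟨e, he⟩ : ∃ e : ℕ, hgt p T ℓ b = (p : ℝ) ^ e := by
    have h2 := Padic.norm_eq_zpow_neg_valuation hβ
    have h3 : hgt p T ℓ b = (p : ℝ) ^ ((T : ℤ) - (ℓ (b j1)).valuation) := by
      rw [h1, h2, sub_eq_add_neg, zpow_add₀ hp0.ne', zpow_natCast]
    have h4 : 0 < (T : ℤ) - (ℓ (b j1)).valuation := by
      rw [h3] at hle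
      exact (one_lt_zpow_iff_right₀ hp1).1 hle
    refine ⟨((T : ℤ) - (ℓ (b j1)).valuation).toNat, ?_⟩
    rw [h3, ← zpow_natCast, Int.toNat_of_nonneg h4.le]
  have hr : ∀ i, ∃ r : ℤ, (p : ℝ) ^ e * ‖ℓ (b i) / ℓ (b j1) + r‖ ≤ 1 := by
    intro i
    apply exists_int_near
    rw [norm_div, div_le_one hβn]
    exact hmax i
  choose r hr using hr
  let c : Fin k → ℤ := fun i => if i = j1 then (p : ℤ) ^ e else r i
  refine ⟨(1 : Matrix (Fin k) (Fin k) ℤ).updateCol j1 c, ?_, ?_⟩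
  · rw [← Matrix.cramer_apply, Matrix.cramer_one]
    simp [c, he]
  · intro i
    have hA : ∀ j, ((1 : Matrix (Fin k) (Fin k) ℤ).updateCol j1 c) i j =
        (if j = j1 then c i else 0) + (if j = i then (if i = j1 then 0 else 1) else 0) := by
      intro j
      rw [Matrix.updateCol_apply, Matrix.one_apply]
      by_cases h1 : j = j1 <;> by_cases h2 : i = j <;> by_cases h3 : i = j1 <;>
        simp [h1, h2, h3, eq_comm] <;> grind
    have hsum : ℓ (∑ j, ((1 : Matrix (Fin k) (Fin k) ℤ).updateCol j1 c) i j • b j) =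
        (c i : ℚ_[p]) * ℓ (b j1) + (if i = j1 then 0 else ℓ (b i)) := by
      rw [map_comb]
      simp only [hA]
      push_cast
      simp only [add_mul, Finset.sum_add_distrib, ite_mul, zero_mul, Finset.sum_ite_eq',
        Finset.mem_univ, if_true, one_mul]
    rw [hsum]
    rw [h1] at he
    by_cases hi : i = j1
    · simp only [c, hi, if_true]
      push_cast
      rw [add_zero, norm_mul, norm_pow, Padic.norm_p]
      calc _ = ((p : ℝ)⁻¹) ^ e * ((p : ℝ) ^ T * ‖ℓ (b j1)‖) := by ring
        _ = 1 := by rw [he, ← mul_pow, inv_mul_cancel₀ hp0.ne', one_pow]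
        _ ≤ 1 := le_rfl
    · simp only [c, hi, if_false]
      have : (r i : ℚ_[p]) * ℓ (b j1) + ℓ (b i) = (ℓ (b i) / ℓ (b j1) + r i) * ℓ (b j1) := by
        field_simp; ring
      rw [this, norm_mul]
      calc _ = ((p : ℝ) ^ T * ‖ℓ (b j1)‖) * ‖ℓ (b i) / ℓ (b j1) + r i‖ := by ring
        _ ≤ 1 := by rw [he]; exact hr i

theorem psi_lower {k m : ℕ} (hkm : k ≤ m) (a : Fin m → ℝ) (ha : ∀ i, 0 < a i) (T : ℕ)
    (ℓ : (Fin m → ℤ) →+ ℚ_[p])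
    (b : Fin k → Fin m → ℤ) (hb : LinearIndependent ℤ b) (σ : ℝ) (hσ : 0 < σ) (hσ1 : σ ≤ 1)
    (h : ∀ v : Fin m → ℤ, v ≠ 0 → (p : ℝ) ^ T * ‖ℓ v‖ ≤ 1 → ∃ i, σ ≤ a i * |(v i : ℝ)|) :
    (σ / m) ^ m ≤ psi p a T ℓ b := by
  have hp0 : (0 : ℝ) < (p : ℝ) ^ T := pow_pos (by exact_mod_cast (Fact.out : p.Prime).pos) T
  have hle1 : σ / m ≤ 1 := by
    rcases Nat.eq_zero_or_pos m with rfl | hm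
    · simp
    · rw [div_le_one (by exact_mod_cast hm)]
      exact hσ1.trans (by exact_mod_cast hm)
  rcases Nat.eq_zero_or_pos k with rfl | hk
  · have : psi p a T ℓ b = 1 := by simp [psi, nu_zero, hgt]
    rw [this]
    exact pow_le_one₀ (by positivity) hle1
  obtain ⟨A, hA, hAℓ⟩ := exists_reduction p T ℓ b
  let w : Fin k → Fin m → ℤ := fun i => ∑ j, A i j • b j
  have hdet : A.det ≠ 0 := by
    intro h0
    rw [h0] at hA
    have := one_le_hgt p T ℓ b
    simp at hA; linarith
  have hw : LinearIndependent ℤ w := by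
    rw [Fintype.linearIndependent_iff]
    intro c hc
    have h1 : ∑ j, (Matrix.vecMul c A j) • b j = 0 := by
      rw [← hc]
      simp only [w, Finset.smul_sum, smul_smul]
      rw [Finset.sum_comm]
      refine Finset.sum_congr rfl fun j _ => ?_
      rw [← Finset.sum_smul]
      rfl
    have h2 := (Fintype.linearIndependent_iff.1 hb) _ h1
    have h3 := Matrix.eq_zero_of_vecMul_eq_zero hdet (funext h2 : Matrix.vecMul c A = 0)
    intro i; rw [h3]; rfl
  have hnu : nu a w = psi p a T ℓ b := by
    rw [nu_mul a b w A (fun i => rfl), hA, psi, mul_comm]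
  have hkr : (0 : ℝ) < k := by exact_mod_cast hk
  have hkm' : (k : ℝ) ≤ m := by exact_mod_cast hkm
  have hlow : (σ / k) ^ k ≤ nu a w := by
    by_contra hcon
    push Not at hcon
    obtain ⟨c, hc0, hc⟩ := nu_minkowski a ha w hw (σ / k) (by positivity) hcon
    rw [mul_div_cancel₀ _ hkr.ne'] at hc
    have hv0 : ∑ j, c j • w j ≠ 0 := by
      intro h0
      apply hc0
      ext i
      exact (Fintype.linearIndependent_iff.1 hw) c h0 i
    obtain ⟨i, hi⟩ := h _ hv0 (by
      rw [map_comb]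
      have := int_sum_norm_le p c (fun j => ℓ (w j)) ((p : ℝ) ^ T)⁻¹ (by positivity) (fun i => by
        have := hAℓ i
        rwa [← le_div_iff₀' hp0, one_div] at this)
      calc _ ≤ (p : ℝ) ^ T * ((p : ℝ) ^ T)⁻¹ := by gcongr
        _ = 1 := mul_inv_cancel₀ hp0.ne')
    exact absurd (hc i) (not_lt.2 hi)
  rw [← hnu]
  refine le_trans ?_ hlow
  calc (σ / m) ^ m ≤ (σ / m) ^ k := pow_le_pow_of_le_one (by positivity) hle1 hkm
    _ ≤ _ := by gcongr

def castL (m : ℕ) : (Fin m → ℤ) →ₗ[ℤ] (Fin m → ℚ) := (Algebra.linearMap ℤ ℚ).compLeft (Fin m)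

theorem castL_apply {m : ℕ} (v : Fin m → ℤ) (i : Fin m) : castL m v i = (v i : ℚ) := rfl

theorem castL_inj {m : ℕ} : Function.Injective (castL m) := by
  intro v w h
  ext i
  have := congrFun h i
  rw [castL_apply, castL_apply] at this
  exact_mod_cast this

theorem li_castL {k m : ℕ} (w : Fin k → Fin m → ℤ) :
    LinearIndependent ℤ w ↔ LinearIndependent ℚ (fun j => castL m (w j)) := by
  rw [← LinearIndependent.iff_fractionRing ℤ ℚ]
  exact (LinearMap.linearIndependent_iff (castL m) (LinearMap.ker_eq_bot.2 castL_inj)).symm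

theorem exists_int_mul {m : ℕ} (w : Fin m → ℚ) :
    ∃ (D : ℤ) (v : Fin m → ℤ), D ≠ 0 ∧ castL m v = (D : ℚ) • w := by
  classical
  refine ⟨∏ i, ((w i).den : ℤ), fun i => (∏ l ∈ Finset.univ.erase i, ((w l).den : ℤ)) * (w i).num,
    Finset.prod_ne_zero_iff.2 fun i _ => by exact_mod_cast (w i).den_ne_zero, ?_⟩
  ext i
  rw [castL_apply, Pi.smul_apply, smul_eq_mul, ← Finset.mul_prod_erase _ _ (Finset.mem_univ i)]
  push_cast
  have h := Rat.mul_den_eq_num (w i)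
  rw [← h]; ring

theorem exists_zbasis {m : ℕ} (W : Submodule ℚ (Fin m → ℚ)) :
    ∃ b : Fin (Module.finrank ℚ W) → Fin m → ℤ, LinearIndependent ℤ b ∧
      (∀ j, castL m (b j) ∈ W) ∧
      ∀ v, castL m v ∈ W → ∃ c : Fin (Module.finrank ℚ W) → ℤ, v = ∑ j, c j • b j := by
  suffices H : ∃ (r : ℕ) (b : Fin r → Fin m → ℤ), r = Module.finrank ℚ W ∧ LinearIndependent ℤ b ∧
      (∀ j, castL m (b j) ∈ W) ∧
      ∀ v, castL m v ∈ W → ∃ c : Fin r → ℤ, v = ∑ j, c j • b j by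
    obtain ⟨r, b, hr, hb⟩ := H
    subst hr
    exact ⟨b, hb⟩
  let N : Submodule ℤ (Fin m → ℤ) := (W.restrictScalars ℤ).comap (castL m)
  let B := Module.finBasis ℤ N
  have hli : LinearIndependent ℤ (fun j => (B j : Fin m → ℤ)) :=
    B.linearIndependent.map' N.subtype (Submodule.ker_subtype N)
  have hin : ∀ j, castL m (B j) ∈ W := fun j => (B j).2
  have hsp : ∀ v, castL m v ∈ W → ∃ c : Fin (Module.finrank ℤ N) → ℤ, v = ∑ j, c j • (B j : Fin m → ℤ) := by
    intro v hv
    refine ⟨fun j => B.repr ⟨v, hv⟩ j, ?_⟩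
    have := congrArg (Subtype.val) (B.sum_repr ⟨v, hv⟩)
    simp only [Submodule.coe_sum, Submodule.coe_smul] at this
    exact this.symm
  refine ⟨Module.finrank ℤ N, fun j => (B j : Fin m → ℤ), ?_, hli, hin, hsp⟩
  have hli2 := (li_castL _).1 hli
  have hspan : Submodule.span ℚ (Set.range fun j => castL m (B j)) = W := by
    apply le_antisymm
    · rw [Submodule.span_le]
      rintro _ ⟨j, rfl⟩
      exact hin j
    · intro w hw
      obtain ⟨D, v, hD, hv⟩ := exists_int_mul w
      have hvW : castL m v ∈ W := by rw [hv]; exact W.smul_mem _ hw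
      obtain ⟨c, hc⟩ := hsp v hvW
      have hD' : (D : ℚ) ≠ 0 := by exact_mod_cast hD
      have : w = (D : ℚ)⁻¹ • castL m v := by rw [hv, smul_smul, inv_mul_cancel₀ hD', one_smul]
      rw [this]
      apply Submodule.smul_mem
      rw [hc, map_sum]
      refine Submodule.sum_mem _ fun j _ => ?_
      rw [map_zsmul]
      have hj : castL m (B j) ∈ Submodule.span ℚ (Set.range fun j => castL m (B j)) :=
        Submodule.subset_span ⟨j, rfl⟩
      exact zsmul_mem hj _
  have := finrank_span_eq_card hli2
  rw [hspan] at this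
  simpa using this.symm

noncomputable def zb {m : ℕ} (W : Submodule ℚ (Fin m → ℚ)) :
    Fin (Module.finrank ℚ W) → Fin m → ℤ := (exists_zbasis W).choose

theorem zb_li {m : ℕ} (W : Submodule ℚ (Fin m → ℚ)) : LinearIndependent ℤ (zb W) :=
  (exists_zbasis W).choose_spec.1

theorem zb_mem {m : ℕ} (W : Submodule ℚ (Fin m → ℚ)) (j) : castL m (zb W j) ∈ W :=
  (exists_zbasis W).choose_spec.2.1 j

theorem zb_span {m : ℕ} (W : Submodule ℚ (Fin m → ℚ)) (v) (hv : castL m v ∈ W) :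
    ∃ c : Fin (Module.finrank ℚ W) → ℤ, v = ∑ j, c j • zb W j :=
  (exists_zbasis W).choose_spec.2.2 v hv

noncomputable def Psi {m : ℕ} (a : Fin m → ℝ) (T : ℕ) (W : Submodule ℚ (Fin m → ℚ))
    (ℓ : (Fin m → ℤ) →+ ℚ_[p]) : ℝ := psi p a T ℓ (zb W)

theorem Psi_le {k m : ℕ} (a : Fin m → ℝ) (T : ℕ) (W : Submodule ℚ (Fin m → ℚ))
    (ℓ : (Fin m → ℤ) →+ ℚ_[p]) (hk : k = Module.finrank ℚ W) (w : Fin k → Fin m → ℤ)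
    (hw : LinearIndependent ℤ w) (hW : ∀ j, castL m (w j) ∈ W) :
    Psi p a T W ℓ ≤ psi p a T ℓ w := by
  subst hk
  choose A hA using fun i => zb_span W (w i) (hW i)
  exact psi_min p a T ℓ (zb W) w (Matrix.of A) hA hw

theorem finrank_le_m {m : ℕ} (W : Submodule ℚ (Fin m → ℚ)) : Module.finrank ℚ W ≤ m := by
  have := Submodule.finrank_le W
  simpa using this

theorem Psi_sup {m : ℕ} (a : Fin m → ℝ) (ha : ∀ i, 0 < a i) (T : ℕ) (W : Submodule ℚ (Fin m → ℚ))
    (ℓ : (Fin m → ℤ) →+ ℚ_[p]) (v : Fin m → ℤ) (hv : castL m v ∉ W) (s : ℝ)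
    (hs : ∀ i, a i * |(v i : ℝ)| ≤ s) (hs0 : 0 ≤ s) (hℓ : (p : ℝ) ^ T * ‖ℓ v‖ ≤ 1) :
    Psi p a T (W ⊔ Submodule.span ℚ {castL m v}) ℓ ≤ m * s * Psi p a T W ℓ := by
  set W2 := W ⊔ Submodule.span ℚ {castL m v} with hW2
  let w : Fin (Module.finrank ℚ W + 1) → Fin m → ℤ := Fin.cons v (zb W)
  have hw : LinearIndependent ℤ w := by
    rw [li_castL]
    have : (fun j => castL m (w j)) = Fin.cons (castL m v) (fun j => castL m (zb W j)) := by
      ext j i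
      refine Fin.cases ?_ (fun j => ?_) j <;> simp [w]
    rw [this, linearIndependent_finCons]
    refine ⟨(li_castL _).1 (zb_li W), fun h => hv ?_⟩
    refine (Submodule.span_le.2 ?_) h
    rintro _ ⟨j, rfl⟩
    exact zb_mem W j
  have hwW : ∀ j, castL m (w j) ∈ W2 := by
    intro j
    refine Fin.cases ?_ (fun j => ?_) j
    · exact (le_sup_right : _ ≤ W2) (Submodule.mem_span_singleton_self _)
    · exact (le_sup_left : W ≤ W2) (zb_mem W j)
  have hk : Module.finrank ℚ W + 1 = Module.finrank ℚ W2 := by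
    apply le_antisymm
    · have h1 : LinearIndependent ℚ (fun j => (⟨castL m (w j), hwW j⟩ : W2)) := by
        apply LinearIndependent.of_comp W2.subtype
        exact (li_castL _).1 hw
      simpa using h1.fintype_card_le_finrank
    · have h1 := Submodule.finrank_add_le_finrank_add_finrank W (Submodule.span ℚ {castL m v})
      have h2 := finrank_span_singleton (K := ℚ) (v := castL m v) (by
        intro h0; exact hv (by rw [h0]; exact W.zero_mem))
      rw [h2] at h1
      exact h1
  have h1 := Psi_le p a T W2 ℓ hk w hw hwW
  refine h1.trans ((psi_cons p a ha T ℓ (zb W) v s hs hs0 hℓ).trans ?_)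
  have h2 := finrank_le_m W2
  rw [← hk] at h2
  have h3 : ((Module.finrank ℚ W : ℝ) + 1) ≤ m := by exact_mod_cast h2
  have h4 : 0 ≤ psi p a T ℓ (zb W) :=
    mul_nonneg (nu_nonneg _ _) (zero_le_one.trans (one_le_hgt p T ℓ _))
  rw [Psi]
  gcongr

theorem Psi_bot {m : ℕ} (a : Fin m → ℝ) (T : ℕ) (ℓ : (Fin m → ℤ) →+ ℚ_[p]) :
    Psi p a T ⊥ ℓ = 1 := by
  have h : ∀ {k : ℕ} (hk : k = 0) (w : Fin k → Fin m → ℤ), psi p a T ℓ w = 1 := by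
    intro k hk w
    subst hk
    simp [psi, nu_zero, hgt]
  exact h (finrank_bot ℚ _) _

theorem marked_lower {m : ℕ} {X : Type*} (a : Fin m → ℝ) (ha : ∀ i, 0 < a i) (T : ℕ)
    (ℓ : X → (Fin m → ℤ) →+ ℚ_[p]) (ε ρ : ℝ) (hε : 0 < ε) (hερ : ε ≤ ρ) (hρ : ρ ≤ 1) (y : X)
    (h : Marked (fun W y => Psi p a T W (ℓ y)) ε ρ Set.univ y)
    (v : Fin m → ℤ) (hv : v ≠ 0) (hℓ : (p : ℝ) ^ T * ‖ℓ y v‖ ≤ 1) :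
    ∃ i, ε / (2 * m) ≤ a i * |(v i : ℝ)| := by
  classical
  by_contra hcon
  push Not at hcon
  obtain ⟨F, -, hchain, hin, hout⟩ := h
  have hm : (0 : ℝ) < m := by
    rcases Nat.eq_zero_or_pos m with rfl | hm
    · exact absurd (Subsingleton.elim v 0) hv
    · exact_mod_cast hm
  obtain ⟨W1, hW1, hP1, hcmp⟩ : ∃ W1 : Submodule ℚ (Fin m → ℚ), castL m v ∉ W1 ∧
      Psi p a T W1 (ℓ y) ≤ 1 ∧ ∀ r ∈ F, (r ≤ W1) ∨ (W1 ≤ r ∧ castL m v ∈ r) := by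
    rcases (F.filter fun W => castL m v ∉ W).eq_empty_or_nonempty with he | hne
    · refine ⟨⊥, ?_, (Psi_bot p a T _).le, fun r hr => ?_⟩
      · rw [Submodule.mem_bot]
        intro h0
        exact hv (castL_inj (by rw [h0, map_zero]))
      · right
        refine ⟨bot_le, ?_⟩
        by_contra h
        have : r ∈ F.filter fun W => castL m v ∉ W := Finset.mem_filter.2 ⟨hr, h⟩
        rw [he] at this
        simp at this
    · obtain ⟨W1, hmax⟩ := Finset.exists_maximal hne
      have h1 := Finset.mem_filter.1 hmax.prop
      refine ⟨W1, h1.2, (hin W1 h1.1).2.le.trans hρ, fun r hr => ?_⟩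
      by_cases hvr : castL m v ∈ r
      · right
        refine ⟨?_, hvr⟩
        rcases hchain W1 h1.1 r hr with h | h
        · exact h
        · exact absurd (h hvr) h1.2
      · left
        rcases hchain W1 h1.1 r hr with h | h
        · exact hmax.le_of_ge (Finset.mem_filter.2 ⟨hr, hvr⟩) h
        · exact h
  have hsup := Psi_sup p a ha T W1 (ℓ y) v hW1 (ε / (2 * m)) (fun i => (hcon i).le) (by positivity) hℓ
  have hlt : Psi p a T (W1 ⊔ Submodule.span ℚ {castL m v}) (ℓ y) < ε := by
    refine hsup.trans_lt ?_
    have : (m : ℝ) * (ε / (2 * m)) = ε / 2 := by field_simp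
    rw [this]
    calc ε / 2 * Psi p a T W1 (ℓ y) ≤ ε / 2 * 1 := by gcongr
      _ < ε := by linarith
  by_cases hmem : (W1 ⊔ Submodule.span ℚ {castL m v}) ∈ F
  · exact absurd (hin _ hmem).1 (not_le.2 hlt)
  · have := hout _ (Set.mem_univ _) hmem (by
      intro r hr
      rcases hcmp r hr with h | ⟨h, h'⟩
      · right; exact h.trans le_sup_left
      · left
        refine sup_le h ?_
        rw [Submodule.span_singleton_le_iff_mem]
        exact h')
    simp only at this
    linarith

noncomputable def ell {n : ℕ} (y : Fin n → ℚ_[p]) : (Fin (n + 1) → ℤ) →+ ℚ_[p] :=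
  AddMonoidHom.mk' (fun v => lf p (fun i => (v i : ℚ_[p])) y) (by
    intro v w
    simp only [lf, Pi.add_apply, Int.cast_add, add_mul, Finset.sum_add_distrib]
    ring)

theorem ell_apply {n : ℕ} (y : Fin n → ℚ_[p]) (v : Fin (n + 1) → ℤ) :
    ell p y v = lf p (fun i => (v i : ℚ_[p])) y := rfl

theorem lf_cont {n : ℕ} (c : Fin (n + 1) → ℚ_[p]) : Continuous (fun y => lf p c y) := by
  unfold lf; fun_prop

theorem Psi_cont {d n : ℕ} {f : (Fin d → ℚ_[p]) → (Fin n → ℚ_[p])} {x : Fin d → ℚ_[p]}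
    (hf : ContinuousAt f x) (a : Fin (n + 1) → ℝ) (T : ℕ) (W : Submodule ℚ (Fin (n + 1) → ℚ)) (ρ : ℝ)
    (h : Psi p a T W (ell p (f x)) < ρ) :
    ∃ j, ∀ y ∈ bb p x j, Psi p a T W (ell p (f y)) < ρ := by
  have hp0 : (0 : ℝ) < (p : ℝ) ^ T := pow_pos (by exact_mod_cast (Fact.out : p.Prime).pos) T
  have hev : ∀ᶠ y in nhds x, ∀ j, ‖ell p (f y) (zb W j) - ell p (f x) (zb W j)‖ < ((p : ℝ) ^ T)⁻¹ := by
    rw [Filter.eventually_all]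
    intro j
    have hc : ContinuousAt (fun y => ell p (f y) (zb W j)) x :=
      ContinuousAt.comp (g := fun y => lf p (fun e => (zb W j e : ℚ_[p])) y)
        (lf_cont p _).continuousAt hf
    have := Metric.tendsto_nhds.1 hc _ (inv_pos.2 hp0)
    simpa [dist_eq_norm] using this
  obtain ⟨V, hV, hVo, hxV⟩ := _root_.mem_nhds_iff.1 hev
  obtain ⟨j, hj⟩ := exists_bb_subset p hVo hxV
  refine ⟨j, fun y hy => lt_of_le_of_lt ?_ h⟩
  have hy' := hV (hj hy)
  simp only [Psi, psi]
  refine mul_le_mul_of_nonneg_left ?_ (nu_nonneg _ _)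
  apply hgt_le p T _ _ _ (one_le_hgt p T _ _)
  intro i
  have h1 : ‖ell p (f y) (zb W i)‖ ≤ max ((p : ℝ) ^ T)⁻¹ ‖ell p (f x) (zb W i)‖ := by
    have := IsUltrametricDist.norm_add_le_max (ell p (f y) (zb W i) - ell p (f x) (zb W i))
      (ell p (f x) (zb W i))
    rw [sub_add_cancel] at this
    exact this.trans (max_le_max (hy' i).le le_rfl)
  calc _ ≤ (p : ℝ) ^ T * max ((p : ℝ) ^ T)⁻¹ ‖ell p (f x) (zb W i)‖ := by gcongr
    _ = max 1 ((p : ℝ) ^ T * ‖ell p (f x) (zb W i)‖) := by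
      rw [mul_max_of_nonneg _ _ hp0.le, mul_inv_cancel₀ hp0.ne']
    _ ≤ _ := max_le (one_le_hgt p T _ _) (le_hgt p T _ _ i)

theorem quant {d n : ℕ} {U : Set (Fin d → ℚ_[p])}
    {f : (Fin d → ℚ_[p]) → (Fin n → ℚ_[p])} (hf : ContinuousOn f U) (hU : IsOpen U)
    (x0 : Fin d → ℚ_[p]) (j0 K : ℕ) (hsub : bb p x0 j0 ⊆ U)
    (μ : Measure (Fin d → ℚ_[p]))
    (hG : ∀ (c : Fin (n + 1) → ℚ_[p]) (x : Fin d → ℚ_[p]) (j : ℕ), x ∈ bb p x0 j0 → j0 ≤ j →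
        ∀ y1 ∈ bb p x j, ∀ L : ℕ,
          (p ^ L : ℕ) * μ {y ∈ bb p x j | ‖lf p c (f y)‖ < ((p : ℝ)⁻¹ ^ L) ^ K * ‖lf p c (f y1)‖} ≤
            K * μ (bb p x j))
    (D : ℝ≥0∞) (hD : ∀ (x : Fin d → ℚ_[p]) (j : ℕ), μ (bb p x j) ≤ D * μ (bb p x (j + 1)))
    (a : Fin (n + 1) → ℝ) (ha : ∀ i, 0 < a i) (T : ℕ) (σ : ℝ) (hσ : 0 < σ) (hσ1 : σ ≤ 1)
    (h0 : ∀ v : Fin (n + 1) → ℤ, v ≠ 0 → (p : ℝ) ^ T * ‖ell p (f x0) v‖ ≤ 1 →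
      ∃ i, σ ≤ a i * |(v i : ℝ)|) (L : ℕ) (ρ : ℝ) (hρ : ρ = (σ / (n + 1 : ℕ)) ^ (n + 1)) :
    μ {x ∈ bb p x0 j0 | ∃ v : Fin (n + 1) → ℤ, v ≠ 0 ∧ (p : ℝ) ^ T * ‖ell p (f x) v‖ ≤ 1 ∧
        ∀ i, a i * |(v i : ℝ)| < ρ * ((p : ℝ)⁻¹ ^ L) ^ K / (2 * (n + 1 : ℕ))} ≤
      kmN D (n + 2) * (K / (p ^ L : ℕ)) * μ (bb p x0 j0) := by
  have hp := (Fact.out : p.Prime)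
  have hp0 : (0 : ℝ) < (p : ℝ) ^ T := pow_pos (by exact_mod_cast hp.pos) T
  have hρ0 : 0 < ρ := by rw [hρ]; positivity
  have hρ1 : ρ ≤ 1 := by
    rw [hρ]
    refine pow_le_one₀ (by positivity) ?_
    rw [div_le_one (by positivity)]
    refine hσ1.trans ?_
    push_cast
    linarith [(Nat.cast_nonneg n : (0 : ℝ) ≤ n)]
  set q := ((p : ℝ)⁻¹ ^ L) ^ K with hq
  have hq0 : 0 < q := pow_pos (pow_pos (q_pos p) _) _
  have hq1 : q ≤ 1 := pow_le_one₀ (pow_pos (q_pos p) _).le (pow_le_one₀ (q_pos p).le (q_lt_one p).le)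
  have hερ : ρ * q ≤ ρ := mul_le_of_le_one_right hρ0.le hq1
  have key := km p (P := Submodule ℚ (Fin (n + 1) → ℚ)) (fun W => Module.finrank ℚ W)
    (fun W W' h => Submodule.finrank_lt_finrank_of_lt h) μ D hD
    (fun W y => Psi p a T W (ell p (f y))) (ρ * q) ρ (K / (p ^ L : ℕ)) x0 j0
    (by
      intro W x hx hlt
      exact Psi_cont p (hf.continuousAt (hU.mem_nhds (hsub hx))) a T W ρ hlt)
    (by
      rintro W x hx j hj ⟨y1, hy1, hge⟩
      have hpL : ((p ^ L : ℕ) : ℝ≥0∞) ≠ 0 := by exact_mod_cast pow_ne_zero L hp.ne_zero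
      have hpL' : ((p ^ L : ℕ) : ℝ≥0∞) ≠ ∞ := ENNReal.natCast_ne_top _
      simp only [Psi, psi] at hge ⊢
      by_cases hν : ρ ≤ nu a (zb W)
      · have : {y ∈ bb p x j | nu a (zb W) * hgt p T (ell p (f y)) (zb W) < ρ * q} = ∅ := by
          ext y
          simp only [Set.mem_ofPred_eq, Set.mem_empty_iff_false, iff_false, not_and, not_lt]
          intro _
          calc ρ * q ≤ ρ := hερ
            _ ≤ nu a (zb W) * 1 := by rw [mul_one]; exact hν
            _ ≤ _ := by
              gcongr
              · exact nu_nonneg _ _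
              · exact one_le_hgt p T _ _
        rw [this]; simp
      · push Not at hν
        rcases hgt_cases p T (ell p (f y1)) (zb W) with h1 | ⟨i, h1, _⟩
        · rw [h1, mul_one] at hge
          exact absurd hge (not_le.2 hν)
        · rw [h1] at hge
          have hνpos : 0 < nu a (zb W) := nu_pos a ha _ (zb_li W)
          have hg := hG (fun e => (zb W i e : ℚ_[p])) x j hx hj y1 hy1 L
          have hss : {y ∈ bb p x j | nu a (zb W) * hgt p T (ell p (f y)) (zb W) < ρ * q} ⊆
              {y ∈ bb p x j | ‖lf p (fun e => (zb W i e : ℚ_[p])) (f y)‖ <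
                q * ‖lf p (fun e => (zb W i e : ℚ_[p])) (f y1)‖} := by
            rintro y ⟨hy, hlt⟩
            refine ⟨hy, ?_⟩
            rw [← ell_apply, ← ell_apply]
            have h2 := le_hgt p T (ell p (f y)) (zb W) i
            have h3 : nu a (zb W) * ((p : ℝ) ^ T * ‖ell p (f y) (zb W i)‖) <
                nu a (zb W) * ((p : ℝ) ^ T * (q * ‖ell p (f y1) (zb W i)‖)) := by
              calc _ ≤ nu a (zb W) * hgt p T (ell p (f y)) (zb W) := by gcongr
                _ < ρ * q := hlt
                _ ≤ (nu a (zb W) * ((p : ℝ) ^ T * ‖ell p (f y1) (zb W i)‖)) * q := by gcongr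
                _ = _ := by ring
            exact lt_of_mul_lt_mul_left (lt_of_mul_lt_mul_left h3 hνpos.le) hp0.le
          refine (measure_mono hss).trans ?_
          rw [← ENNReal.mul_div_right_comm, ENNReal.le_div_iff_mul_le (Or.inl hpL) (Or.inl hpL'), mul_comm]
          exact hg)
    (n + 2) (Finset.range (n + 2)) (by simp) Set.univ
    (fun W _ => Finset.mem_range.2 (by have := finrank_le_m W; omega)) x0 (self_mem_bb p x0 j0) j0 le_rfl
    (fun W _ => ⟨x0, self_mem_bb p x0 j0, by
      rw [hρ]
      exact psi_lower p (finrank_le_m W) a ha T _ _ (zb_li W) σ hσ hσ1 h0⟩)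
  refine (measure_mono ?_).trans key
  rintro x ⟨hx, v, hv, hℓ, hsm⟩
  refine ⟨hx, fun hm => ?_⟩
  obtain ⟨i, hi⟩ := marked_lower p a ha T (fun y => ell p (f y)) (ρ * q) ρ (by positivity) hερ hρ1 x hm v hv hℓ
  exact absurd (hsm i) (not_lt.2 hi)

noncomputable def plusZ (z : ℤ) : ℝ := if z = 0 then 1 else |(z : ℝ)|

theorem one_le_plusZ (z : ℤ) : 1 ≤ plusZ z := by
  unfold plusZ
  split_ifs with h
  · exact le_rfl
  · exact_mod_cast Int.one_le_abs h

theorem abs_le_plusZ (z : ℤ) : |(z : ℝ)| ≤ plusZ z := by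
  unfold plusZ
  split_ifs with h
  · simp [h]
  · exact le_rfl

noncomputable def PPl {m : ℕ} (v : Fin m → ℤ) : ℝ := ∏ i, plusZ (v i)

theorem one_le_PPl {m : ℕ} (v : Fin m → ℤ) : 1 ≤ PPl v := by
  unfold PPl
  calc (1 : ℝ) = ∏ i : Fin m, (1 : ℝ) := by simp
    _ ≤ _ := Finset.prod_le_prod (fun _ _ => zero_le_one) fun i _ => one_le_plusZ _

theorem plusZ_le_PPl {m : ℕ} (v : Fin m → ℤ) (i : Fin m) : plusZ (v i) ≤ PPl v := by
  classical
  unfold PPl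
  rw [← Finset.mul_prod_erase _ _ (Finset.mem_univ i)]
  refine le_mul_of_one_le_right (zero_le_one.trans (one_le_plusZ _)) ?_
  calc (1 : ℝ) = ∏ l ∈ Finset.univ.erase i, (1 : ℝ) := by simp
    _ ≤ _ := Finset.prod_le_prod (fun _ _ => zero_le_one) fun i _ => one_le_plusZ _

theorem PPl_finite {m : ℕ} (C : ℝ) : {v : Fin m → ℤ | PPl v ≤ C}.Finite := by
  refine (Set.finite_Icc (fun _ : Fin m => -⌈C⌉) (fun _ => ⌈C⌉)).subset ?_
  intro v hv
  have h : ∀ i, |v i| ≤ ⌈C⌉ := by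
    intro i
    have h1 : |(v i : ℝ)| ≤ C := (abs_le_plusZ _).trans ((plusZ_le_PPl v i).trans hv)
    have h2 : ((|v i| : ℤ) : ℝ) ≤ ⌈C⌉ := by
      push_cast
      exact h1.trans (Int.le_ceil C)
    exact_mod_cast h2
  exact ⟨fun i => (abs_le.1 (h i)).1, fun i => (abs_le.1 (h i)).2⟩

theorem vwma_iff {n : ℕ} (y : Fin n → ℚ_[p]) : IsVWMA p y ↔ ∃ ε : ℝ, 0 < ε ∧
    {v : Fin (n + 1) → ℤ | ‖ell p y v‖ ≤ PPl v ^ (-(1 + ε))}.Infinite := by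
  have hP : ∀ v : Fin (n + 1) → ℤ, PPl v = piPlusZ (v 0) (fun i => v i.succ) := by
    intro v
    rw [PPl, Fin.prod_univ_succ]
    rfl
  have hinj1 : Function.Injective (fun v : Fin (n + 1) → ℤ => (v 0, fun i : Fin n => v i.succ)) := by
    intro v w h
    simp only [Prod.mk.injEq] at h
    ext i
    refine Fin.cases h.1 (fun i => congrFun h.2 i) i
  have hinj2 : Function.Injective (fun qq : ℤ × (Fin n → ℤ) => (Fin.cons qq.1 qq.2 : Fin (n + 1) → ℤ)) := by
    rintro ⟨q, r⟩ ⟨q', r'⟩ h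
    have := Fin.cons_inj.1 h
    exact Prod.ext this.1 this.2
  constructor
  · rintro ⟨ε, hε, h⟩
    refine ⟨ε, hε, fun hfin => h ?_⟩
    refine (hfin.preimage hinj2.injOn).subset ?_
    intro qq hqq
    simp only [Set.mem_preimage, Set.mem_ofPred_eq] at hqq ⊢
    rw [hP, ell_apply]
    simpa [lf] using hqq
  · rintro ⟨ε, hε, h⟩
    refine ⟨ε, hε, fun hfin => h ?_⟩
    refine (hfin.preimage hinj1.injOn).subset ?_
    intro v hv
    simp only [Set.mem_preimage, Set.mem_ofPred_eq] at hv ⊢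
    rw [hP, ell_apply] at hv
    exact hv

theorem dict1 {n : ℕ} (y : Fin n → ℚ_[p]) (hy : ¬ IsVWMA p y) (γ : ℝ) (hγ : 0 < γ) :
    ∃ T0 : ℕ, ∀ t : Fin (n + 1) → ℕ, ∀ T : ℕ, ∑ i, t i = T → T0 ≤ T → ∀ v : Fin (n + 1) → ℤ, v ≠ 0 →
      (p : ℝ) ^ T * ‖ell p y v‖ ≤ 1 →
      ∃ i, (p : ℝ) ^ (-(γ * T)) ≤ ((p : ℝ) ^ t i)⁻¹ * |(v i : ℝ)| := by
  classical
  have hp1 : (1 : ℝ) < p := by exact_mod_cast (Fact.out : p.Prime).one_lt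
  have hp0 : (0 : ℝ) < p := zero_lt_one.trans hp1
  rw [vwma_iff] at hy
  push Not at hy
  have hfin := hy γ hγ
  set S := {v : Fin (n + 1) → ℤ | ‖ell p y v‖ ≤ PPl v ^ (-(1 + γ))} with hS
  have hne : ∀ v : Fin (n + 1) → ℤ, v ≠ 0 → ell p y v ≠ 0 := by
    intro v hv h0
    have hinj : Function.Injective (fun k : ℤ => k • v) := smul_left_injective ℤ hv
    refine Set.infinite_of_injective_forall_mem hinj (s := S) ?_ hfin
    intro k
    simp only [S, Set.mem_ofPred_eq, map_zsmul, h0, smul_zero, norm_zero]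
    have := one_le_PPl (k • v)
    positivity
  have hev : ∀ᶠ T : ℕ in Filter.atTop, ∀ v ∈ S, v ≠ 0 → 1 < (p : ℝ) ^ T * ‖ell p y v‖ := by
    rw [Filter.eventually_all_finite hfin]
    intro v _
    by_cases hv : v = 0
    · simp [hv]
    · have h1 := (tendsto_pow_atTop_atTop_of_one_lt hp1).atTop_mul_const (norm_pos_iff.2 (hne v hv))
      filter_upwards [h1.eventually_gt_atTop 1] with T hT _
      exact hT
  obtain ⟨T0, hT0⟩ := Filter.eventually_atTop.1 hev
  refine ⟨T0, fun t T hT hle v hv hℓ => ?_⟩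
  by_contra hcon
  push Not at hcon
  have hmem : v ∈ S := by
    obtain ⟨i0, hi0⟩ : ∃ i, v i ≠ 0 := by
      by_contra h; push Not at h; exact hv (funext h)
    have hpt : ∀ i, 0 < (p : ℝ) ^ t i := fun i => pow_pos hp0 _
    have hb : ∀ i, |(v i : ℝ)| < (p : ℝ) ^ t i * (p : ℝ) ^ (-(γ * T)) := by
      intro i
      have := hcon i
      rwa [inv_mul_lt_iff₀ (hpt i)] at this
    have hγT : (p : ℝ) ^ (-(γ * T)) ≤ 1 := Real.rpow_le_one_of_one_le_of_nonpos hp1.le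
      (by have : 0 ≤ γ * T := by positivity
          linarith)
    have h1 : ∀ i, plusZ (v i) ≤ (p : ℝ) ^ t i := by
      intro i
      unfold plusZ
      split_ifs with h
      · exact one_le_pow₀ hp1.le
      · exact (hb i).le.trans (mul_le_of_le_one_right (hpt i).le hγT)
    have h2 : plusZ (v i0) ≤ (p : ℝ) ^ t i0 * (p : ℝ) ^ (-(γ * T)) := by
      unfold plusZ
      rw [if_neg hi0]
      exact (hb i0).le
    have h3 : PPl v ≤ (p : ℝ) ^ ((T : ℝ) * (1 - γ)) := by
      have e1 : (p : ℝ) ^ ((T : ℝ) * (1 - γ)) = (p : ℝ) ^ T * (p : ℝ) ^ (-(γ * T)) := by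
        rw [← Real.rpow_natCast, ← Real.rpow_add hp0]; congr 1; ring
      rw [e1, ← hT, ← Finset.prod_pow_eq_pow_sum, PPl,
        ← Finset.mul_prod_erase _ _ (Finset.mem_univ i0),
        ← Finset.mul_prod_erase _ (fun i => (p : ℝ) ^ t i) (Finset.mem_univ i0), hT]
      calc _ ≤ ((p : ℝ) ^ t i0 * (p : ℝ) ^ (-(γ * T))) * ∏ i ∈ Finset.univ.erase i0, (p : ℝ) ^ t i := by
            gcongr
            · exact Finset.prod_nonneg fun i _ => zero_le_one.trans (one_le_plusZ _)
            · exact fun i _ => zero_le_one.trans (one_le_plusZ _)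
            · exact h1 _
        _ = _ := by ring
    change ‖ell p y v‖ ≤ PPl v ^ (-(1 + γ))
    have h4 : ‖ell p y v‖ ≤ (p : ℝ) ^ (-(T : ℝ)) := by
      rw [Real.rpow_neg hp0.le, Real.rpow_natCast, ← one_div, le_div_iff₀' (pow_pos hp0 T)]
      exact hℓ
    have h5 : ((p : ℝ) ^ ((T : ℝ) * (1 - γ))) ^ (-(1 + γ)) ≤ PPl v ^ (-(1 + γ)) :=
      Real.rpow_le_rpow_of_nonpos (zero_lt_one.trans_le (one_le_PPl v)) h3 (by linarith)
    refine h4.trans (le_trans ?_ h5)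
    rw [← Real.rpow_mul hp0.le]
    apply Real.rpow_le_rpow_of_exponent_le hp1.le
    have : 0 ≤ (T : ℝ) * γ ^ 2 := by positivity
    nlinarith
  exact absurd (hT0 T hle v hmem hv) (not_lt.2 hℓ)

def BadAt {n : ℕ} (y : Fin n → ℚ_[p]) (γ : ℝ) (N : ℕ) (t : Fin (n + 1) → ℕ) : Prop :=
  ∃ v : Fin (n + 1) → ℤ, v ≠ 0 ∧ (p : ℝ) ^ N * ‖ell p y v‖ ≤ 1 ∧
    ∀ i, ((p : ℝ) ^ t i)⁻¹ * |(v i : ℝ)| ≤ (p : ℝ) ^ (-(γ * N))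

theorem dict2 {n : ℕ} (y : Fin n → ℚ_[p]) (hy : IsVWMA p y) :
    ∃ k : ℕ, ∀ N0 : ℕ, ∃ N, N0 ≤ N ∧ ∃ t : Fin (n + 1) → ℕ, ∑ i, t i = N ∧
      BadAt p y (1 / ((k : ℝ) + 1)) N t := by
  have hp1 : (1 : ℝ) < p := by exact_mod_cast (Fact.out : p.Prime).one_lt
  have hp0 : (0 : ℝ) < p := zero_lt_one.trans hp1
  rw [vwma_iff] at hy
  obtain ⟨ε, hε, hinf⟩ := hy
  set m : ℝ := (n : ℝ) + 1 with hm
  have hm0 : 0 < m := by positivity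
  set κ := ε / (2 * m) with hκ
  have hκ0 : 0 < κ := by positivity
  obtain ⟨k, hk⟩ := exists_nat_one_div_lt (show 0 < κ / (1 + ε) by positivity)
  refine ⟨k, fun N0 => ?_⟩
  -- choose v with large product
  obtain ⟨v, hv, hvC⟩ : ∃ v ∈ {v : Fin (n + 1) → ℤ | ‖ell p y v‖ ≤ PPl v ^ (-(1 + ε))},
      v ∉ {v : Fin (n + 1) → ℤ | PPl v ≤ (p : ℝ) ^ (N0 + 2 * m / ε + 1)} :=
    (hinf.sdiff (PPl_finite _)).nonempty
  simp only [Set.mem_ofPred_eq, not_le] at hv hvC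
  let l : Fin (n + 1) → ℝ := fun i => Real.logb p (plusZ (v i))
  have hl0 : ∀ i, 0 ≤ l i := fun i => Real.logb_nonneg hp1 (one_le_plusZ _)
  have hl : ∀ i, (p : ℝ) ^ l i = plusZ (v i) := fun i =>
    Real.rpow_logb hp0 hp1.ne' (zero_lt_one.trans_le (one_le_plusZ _))
  set lam := ∑ i, l i with hlam
  have hPP : PPl v = (p : ℝ) ^ lam := by
    rw [hlam, Real.rpow_sum_of_pos hp0]
    exact Finset.prod_congr rfl fun i _ => (hl i).symm
  have hlamlt : N0 + 2 * m / ε + 1 < lam := by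
    rw [hPP] at hvC
    exact (Real.rpow_lt_rpow_left_iff hp1).1 hvC
  have hme : 0 < 2 * m / ε := by positivity
  have hN0 : (0 : ℝ) ≤ N0 := Nat.cast_nonneg _
  have hlam0 : 0 < lam := by linarith
  let t : Fin (n + 1) → ℕ := fun i => ⌈l i + κ * lam⌉₊
  have hκl : 0 ≤ κ * lam := by positivity
  have ht1 : ∀ i, l i + κ * lam ≤ t i := fun i => Nat.le_ceil _
  have ht2 : ∀ i, (t i : ℝ) ≤ l i + κ * lam + 1 := fun i =>
    (Nat.ceil_lt_add_one (by have := hl0 i; positivity)).le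
  have hT1 : lam ≤ ((∑ i, t i : ℕ) : ℝ) := by
    push_cast
    rw [hlam]
    exact Finset.sum_le_sum fun i _ => by have := ht1 i; linarith
  have hT2 : ((∑ i, t i : ℕ) : ℝ) ≤ lam * (1 + ε) := by
    push_cast
    calc ∑ i, (t i : ℝ) ≤ ∑ i, (l i + κ * lam + 1) := Finset.sum_le_sum fun i _ => ht2 i
      _ = lam + m * (κ * lam) + m := by
        rw [Finset.sum_add_distrib, Finset.sum_add_distrib, ← hlam]
        simp [hm]
      _ ≤ _ := by
        have e1 : m * (κ * lam) = ε / 2 * lam := by rw [hκ]; field_simp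
        have e2 : m ≤ ε / 2 * lam := by
          have : 2 * m / ε < lam := by linarith
          rw [div_lt_iff₀ hε] at this
          linarith
        rw [e1]; linarith
  refine ⟨∑ i, t i, ?_, t, rfl, v, ?_, ?_, ?_⟩
  · have : (N0 : ℝ) ≤ ((∑ i, t i : ℕ) : ℝ) := by linarith
    exact_mod_cast this
  · rintro rfl
    have : lam = 0 := by
      rw [hlam]
      exact Finset.sum_eq_zero fun i _ => by simp [l, plusZ]
    linarith
  · have h1 : ‖ell p y v‖ ≤ (p : ℝ) ^ (-((∑ i, t i : ℕ) : ℝ)) := by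
      refine hv.trans ?_
      rw [hPP, ← Real.rpow_mul hp0.le]
      apply Real.rpow_le_rpow_of_exponent_le hp1.le
      linarith
    rw [Real.rpow_neg hp0.le, Real.rpow_natCast, ← one_div, le_div_iff₀' (pow_pos hp0 _)] at h1
    exact h1
  · intro i
    rw [inv_mul_le_iff₀ (pow_pos hp0 _)]
    refine (abs_le_plusZ _).trans ?_
    rw [← hl i, ← Real.rpow_natCast, ← Real.rpow_add hp0]
    apply Real.rpow_le_rpow_of_exponent_le hp1.le
    have h1 := ht1 i
    have h2 : 1 / ((k : ℝ) + 1) * ((∑ i, t i : ℕ) : ℝ) ≤ κ * lam := by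
      calc _ ≤ κ / (1 + ε) * (lam * (1 + ε)) := by gcongr
        _ = _ := by field_simp
    linarith

theorem key_ineq (n K : ℕ) (hK : 0 < K) (g : ℝ) (hg : 0 < g) :
    ∃ N1 : ℕ, ∀ N : ℕ, N1 ≤ N →
      (p : ℝ) ^ (-(g * N)) <
        ((p : ℝ) ^ (-(g / (4 * (n + 1 : ℕ)) * N)) / (n + 1 : ℕ)) ^ (n + 1) *
          ((p : ℝ)⁻¹ ^ ⌊g * N / (4 * K)⌋₊) ^ K / (2 * (n + 1 : ℕ)) := by
  have hp1 : (1 : ℝ) < p := by exact_mod_cast (Fact.out : p.Prime).one_lt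
  have hp0 : (0 : ℝ) < p := zero_lt_one.trans hp1
  have hKr : (0 : ℝ) < K := by exact_mod_cast hK
  have hr : (1 : ℝ) < (p : ℝ) ^ (g / 2) := Real.one_lt_rpow hp1 (by positivity)
  set m : ℝ := ((n + 1 : ℕ) : ℝ) with hm
  have hm0 : 0 < m := by rw [hm]; positivity
  obtain ⟨N1, hN1⟩ := Filter.eventually_atTop.1
    ((tendsto_pow_atTop_atTop_of_one_lt hr).eventually_gt_atTop (m ^ (n + 1) * (2 * m)))
  refine ⟨N1, fun N hN => ?_⟩
  have h1 := hN1 N hN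
  rw [← Real.rpow_natCast _ N, ← Real.rpow_mul hp0.le] at h1
  have e1 : ((p : ℝ) ^ (-(g / (4 * m) * N))) ^ (n + 1) = (p : ℝ) ^ (-(g * N / 4)) := by
    rw [← Real.rpow_natCast, ← Real.rpow_mul hp0.le, ← hm]
    congr 1
    field_simp
  have e2 : (p : ℝ) ^ (-(g * N / 4)) ≤ ((p : ℝ)⁻¹ ^ ⌊g * N / (4 * K)⌋₊) ^ K := by
    have : ((p : ℝ)⁻¹ ^ ⌊g * N / (4 * K)⌋₊) ^ K = (p : ℝ) ^ (-((⌊g * N / (4 * K)⌋₊ : ℝ) * K)) := by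
      rw [Real.rpow_neg hp0.le, Real.rpow_mul hp0.le, Real.rpow_natCast, Real.rpow_natCast, inv_pow,
        inv_pow]
    rw [this]
    apply Real.rpow_le_rpow_of_exponent_le hp1.le
    have h2 : (⌊g * N / (4 * K)⌋₊ : ℝ) ≤ g * N / (4 * K) := Nat.floor_le (by positivity)
    have h3 : (⌊g * N / (4 * K)⌋₊ : ℝ) * K ≤ g * N / (4 * K) * K := by gcongr
    have h4 : g * N / (4 * K) * K = g * N / 4 := by field_simp
    linarith
  rw [div_pow, e1]
  have h5 : (p : ℝ) ^ (-(g * N)) * (m ^ (n + 1) * (2 * m)) <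
      (p : ℝ) ^ (-(g * N / 4)) * (p : ℝ) ^ (-(g * N / 4)) := by
    calc _ < (p : ℝ) ^ (-(g * N)) * (p : ℝ) ^ (g / 2 * N) := by gcongr
      _ = _ := by
        rw [← Real.rpow_add hp0, ← Real.rpow_add hp0]
        congr 1; ring
  have h6 : (p : ℝ) ^ (-(g * N)) <
      ((p : ℝ) ^ (-(g * N / 4)) * (p : ℝ) ^ (-(g * N / 4))) / (m ^ (n + 1) * (2 * m)) := by
    rwa [lt_div_iff₀ (by positivity)]
  refine h6.trans_le ?_
  calc _ ≤ ((p : ℝ) ^ (-(g * N / 4)) * ((p : ℝ)⁻¹ ^ ⌊g * N / (4 * K)⌋₊) ^ K) /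
        (m ^ (n + 1) * (2 * m)) := by gcongr
    _ = _ := by field_simp

theorem geo_bound (K : ℕ) (hK : 0 < K) (g : ℝ) (hg : 0 < g) (N : ℕ) :
    (((p ^ ⌊g * N / (4 * K)⌋₊ : ℕ) : ℝ≥0∞))⁻¹ ≤
      ENNReal.ofReal (p * ((p : ℝ) ^ (-(g / (4 * K)))) ^ N) := by
  have hp1 : (1 : ℝ) < p := by exact_mod_cast (Fact.out : p.Prime).one_lt
  have hp0 : (0 : ℝ) < p := zero_lt_one.trans hp1
  have hKr : (0 : ℝ) < K := by exact_mod_cast hK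
  set L := ⌊g * N / (4 * K)⌋₊ with hL
  have e : (((p ^ L : ℕ) : ℝ≥0∞))⁻¹ = ENNReal.ofReal (((p : ℝ) ^ L)⁻¹) := by
    rw [ENNReal.ofReal_inv_of_pos (pow_pos hp0 _), ENNReal.ofReal_pow hp0.le]
    simp
  rw [e]
  apply ENNReal.ofReal_le_ofReal
  have h1 : g * N / (4 * K) < L + 1 := Nat.lt_floor_add_one _
  have e2 : (p : ℝ) * ((p : ℝ) ^ (-(g / (4 * K)))) ^ N = (p : ℝ) ^ (1 - g * N / (4 * K)) := by
    rw [← Real.rpow_natCast, ← Real.rpow_mul hp0.le]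
    nth_rewrite 1 [← Real.rpow_one (p : ℝ)]
    rw [← Real.rpow_add hp0]
    congr 1; ring
  rw [e2, ← Real.rpow_natCast, ← Real.rpow_neg hp0.le]
  apply Real.rpow_le_rpow_of_exponent_le hp1.le
  linarith

theorem ae_not_bad {d n : ℕ} {U : Set (Fin d → ℚ_[p])}
    {f : (Fin d → ℚ_[p]) → (Fin n → ℚ_[p])} (hf : ContinuousOn f U) (hU : IsOpen U)
    (x0 : Fin d → ℚ_[p]) (j0 K : ℕ) (hK : 0 < K) (hsub : bb p x0 j0 ⊆ U)
    (μ : Measure (Fin d → ℚ_[p])) [hμ : μ.IsAddHaarMeasure]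
    (hG : ∀ (c : Fin (n + 1) → ℚ_[p]) (x : Fin d → ℚ_[p]) (j : ℕ), x ∈ bb p x0 j0 → j0 ≤ j →
        ∀ y1 ∈ bb p x j, ∀ L : ℕ,
          (p ^ L : ℕ) * μ {y ∈ bb p x j | ‖lf p c (f y)‖ < ((p : ℝ)⁻¹ ^ L) ^ K * ‖lf p c (f y1)‖} ≤
            K * μ (bb p x j))
    (hw : ¬ IsVWMA p (f x0)) (g : ℝ) (hg : 0 < g) :
    ∀ᵐ x ∂μ, x ∈ bb p x0 j0 → ∃ N0 : ℕ, ∀ N, N0 ≤ N →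
      ¬ ∃ t : Fin (n + 1) → ℕ, ∑ i, t i = N ∧ BadAt p (f x) g N t := by
  classical
  have hp1 : (1 : ℝ) < p := by exact_mod_cast (Fact.out : p.Prime).one_lt
  have hp0 : (0 : ℝ) < p := zero_lt_one.trans hp1
  have hKr : (0 : ℝ) < K := by exact_mod_cast hK
  obtain ⟨D, hD⟩ := bb_doubling (d := d) p μ
  obtain ⟨T0, hT0⟩ := dict1 p (f x0) hw (g / (4 * (n + 1 : ℕ))) (by positivity)
  obtain ⟨N1, hN1⟩ := key_ineq p n K hK g hg
  set S : ℕ → Set (Fin d → ℚ_[p]) := fun N =>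
    {x ∈ bb p x0 j0 | ∃ t : Fin (n + 1) → ℕ, ∑ i, t i = N ∧ BadAt p (f x) g N t} with hS
  set r : ℝ := (p : ℝ) ^ (-(g / (4 * K))) with hr
  have hr0 : 0 < r := Real.rpow_pos_of_pos hp0 _
  have hr1 : r < 1 := Real.rpow_lt_one_of_one_lt_of_neg hp1 (by
    have : 0 < g / (4 * K) := by positivity
    linarith)
  set C : ℝ≥0∞ := kmN D (n + 2) * K * μ (bb p x0 j0) with hC
  have hCtop : C ≠ ∞ := ENNReal.mul_ne_top
    (ENNReal.mul_ne_top (kmN_ne_top ENNReal.coe_ne_top _) (ENNReal.natCast_ne_top K))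
    (bb_measure_fin p μ x0 j0)
  have hbound : ∀ N, max T0 N1 ≤ N →
      μ (S N) ≤ ENNReal.ofReal (((N : ℝ) + 1) ^ (n + 1) * (p * r ^ N)) * C := by
    intro N hN
    have hNT : T0 ≤ N := (le_max_left _ _).trans hN
    have hNN : N1 ≤ N := (le_max_right _ _).trans hN
    set F : Finset (Fin (n + 1) → ℕ) := Fintype.piFinset fun _ => Finset.range (N + 1) with hF
    have hcard : F.card = (N + 1) ^ (n + 1) := by simp [hF]
    set F' := F.filter fun t => ∑ i, t i = N with hF'
    have hcov : S N ⊆ ⋃ t ∈ F', {x ∈ bb p x0 j0 | BadAt p (f x) g N t} := by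
      rintro x ⟨hx, t, ht, hb⟩
      have htF : t ∈ F' := by
        rw [hF', Finset.mem_filter, hF, Fintype.mem_piFinset]
        refine ⟨fun i => ?_, ht⟩
        rw [Finset.mem_range, Nat.lt_succ_iff, ← ht]
        exact Finset.single_le_sum (f := t) (fun _ _ => Nat.zero_le _) (Finset.mem_univ i)
      exact Set.mem_biUnion (x := t) htF ⟨hx, hb⟩
    have hone : ∀ t ∈ F', μ {x ∈ bb p x0 j0 | BadAt p (f x) g N t} ≤
        ENNReal.ofReal (p * r ^ N) * C := by
      intro t ht
      have htN : ∑ i, t i = N := (Finset.mem_filter.1 ht).2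
      have hσ1 : (p : ℝ) ^ (-(g / (4 * (n + 1 : ℕ)) * N)) ≤ 1 :=
        Real.rpow_le_one_of_one_le_of_nonpos hp1.le (by
          have : 0 ≤ g / (4 * (n + 1 : ℕ)) * N := by positivity
          linarith)
      have hq := quant p hf hU x0 j0 K hsub μ hG D hD (fun i => ((p : ℝ) ^ t i)⁻¹)
        (fun i => by positivity) N ((p : ℝ) ^ (-(g / (4 * (n + 1 : ℕ)) * N)))
        (Real.rpow_pos_of_pos hp0 _) hσ1 (fun v hv h => hT0 t N htN hNT v hv h)
        ⌊g * N / (4 * K)⌋₊ _ rfl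
      calc _ ≤ _ := measure_mono ?_
        _ ≤ _ := hq
        _ = (((p ^ ⌊g * N / (4 * K)⌋₊ : ℕ) : ℝ≥0∞))⁻¹ * C := by
          rw [hC, div_eq_mul_inv]; ring
        _ ≤ _ := by gcongr; exact geo_bound p K hK g hg N
      rintro x ⟨hx, v, hv, h1, h2⟩
      exact ⟨hx, v, hv, h1, fun i => (h2 i).trans_lt (hN1 N hNN)⟩
    calc μ (S N) ≤ μ (⋃ t ∈ F', {x ∈ bb p x0 j0 | BadAt p (f x) g N t}) := measure_mono hcov
      _ ≤ ∑ t ∈ F', μ {x ∈ bb p x0 j0 | BadAt p (f x) g N t} := measure_biUnion_finset_le _ _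
      _ ≤ ∑ t ∈ F', ENNReal.ofReal (p * r ^ N) * C := Finset.sum_le_sum hone
      _ = F'.card * (ENNReal.ofReal (p * r ^ N) * C) := by rw [Finset.sum_const, nsmul_eq_mul]
      _ ≤ ((N + 1) ^ (n + 1) : ℕ) * (ENNReal.ofReal (p * r ^ N) * C) := by
        gcongr
        rw [← hcard]
        exact Finset.card_filter_le _ _
      _ = _ := by
        rw [ENNReal.ofReal_mul (p := ((N : ℝ) + 1) ^ (n + 1)) (by positivity), ← mul_assoc]
        congr 2
        rw [← ENNReal.ofReal_natCast]
        push_cast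
        rfl
  have hsum : Summable fun N : ℕ => ((N : ℝ) + 1) ^ (n + 1) * (p * r ^ N) := by
    have h1 : Summable fun N : ℕ => (N : ℝ) ^ (n + 1) * r ^ N :=
      summable_pow_mul_geometric_of_norm_lt_one _ (by rwa [Real.norm_of_nonneg hr0.le])
    have h2 := ((summable_nat_add_iff 1).2 h1).mul_left ((p : ℝ) * r⁻¹)
    refine h2.congr fun N => ?_
    push_cast
    rw [pow_succ r N]
    field_simp
  set N2 := max T0 N1 with hN2
  have hzero : μ {x | ∃ᶠ N in Filter.atTop, x ∈ S (N + N2)} = 0 := by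
    apply measure_setOfPred_frequently_eq_zero
    have hle : ∑' N, μ (S (N + N2)) ≤
        ∑' N : ℕ, ENNReal.ofReal ((((N + N2 : ℕ) : ℝ) + 1) ^ (n + 1) * (p * r ^ (N + N2))) * C :=
      ENNReal.tsum_le_tsum fun N => hbound _ (Nat.le_add_left _ _)
    refine ne_top_of_le_ne_top ?_ hle
    rw [ENNReal.tsum_mul_right]
    refine ENNReal.mul_ne_top ?_ hCtop
    exact ((summable_nat_add_iff N2).2 hsum).tsum_ofReal_ne_top
  have hae : ∀ᵐ x ∂μ, ¬ ∃ᶠ N in Filter.atTop, x ∈ S (N + N2) := by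
    rw [ae_iff]
    simpa only [not_not] using hzero
  filter_upwards [hae] with x hx hxb
  rw [Filter.not_frequently, Filter.eventually_atTop] at hx
  obtain ⟨N0, hN0⟩ := hx
  refine ⟨N0 + N2, fun N hN hbad => ?_⟩
  refine hN0 (N - N2) (by omega) ?_
  rw [Nat.sub_add_cancel (by omega)]
  exact ⟨hxb, hbad⟩

theorem ae_not_vwma {d n : ℕ} {U : Set (Fin d → ℚ_[p])}
    {f : (Fin d → ℚ_[p]) → (Fin n → ℚ_[p])} (hf : ContinuousOn f U) (hU : IsOpen U)
    (x0 : Fin d → ℚ_[p]) (j0 K : ℕ) (hK : 0 < K) (hsub : bb p x0 j0 ⊆ U)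
    (μ : Measure (Fin d → ℚ_[p])) [hμ : μ.IsAddHaarMeasure]
    (hG : ∀ (c : Fin (n + 1) → ℚ_[p]) (x : Fin d → ℚ_[p]) (j : ℕ), x ∈ bb p x0 j0 → j0 ≤ j →
        ∀ y1 ∈ bb p x j, ∀ L : ℕ,
          (p ^ L : ℕ) * μ {y ∈ bb p x j | ‖lf p c (f y)‖ < ((p : ℝ)⁻¹ ^ L) ^ K * ‖lf p c (f y1)‖} ≤
            K * μ (bb p x j))
    (hw : ¬ IsVWMA p (f x0)) :
    ∀ᵐ x ∂μ, x ∈ bb p x0 j0 → ¬ IsVWMA p (f x) := by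
  have h : ∀ᵐ x ∂μ, ∀ k : ℕ, x ∈ bb p x0 j0 → ∃ N0 : ℕ, ∀ N, N0 ≤ N →
      ¬ ∃ t : Fin (n + 1) → ℕ, ∑ i, t i = N ∧ BadAt p (f x) (1 / ((k : ℝ) + 1)) N t :=
    ae_all_iff.2 fun k => ae_not_bad p hf hU x0 j0 K hK hsub μ hG hw _ (by positivity)
  filter_upwards [h] with x hx hxb hV
  obtain ⟨k, hk⟩ := dict2 p (f x) hV
  obtain ⟨N0, hN0⟩ := hx k hxb
  obtain ⟨N, hN, hbad⟩ := hk N0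
  exact hN0 N hN hbad

theorem chart_restrict {d n : ℕ} {M : Set (Fin n → ℚ_[p])} {U : Set (Fin d → ℚ_[p])}
    {f : (Fin d → ℚ_[p]) → (Fin n → ℚ_[p])} (h : IsChart p d n M U f)
    {U' : Set (Fin d → ℚ_[p])} (hU' : IsOpen U') (hs : U' ⊆ U) : IsChart p d n M U' f := by
  obtain ⟨hU, hf, hinj, hder, hhom, W0, hW0, hMW⟩ := h
  refine ⟨hU', hf.mono hs, hinj.mono hs, fun x hx => hder x (hs hx), ?_, ?_⟩
  · intro x hx V hV hxV
    obtain ⟨W, hW, hfW, hWs⟩ := hhom x (hs hx) (V ∩ U') (hV.inter hU') ⟨hxV, hx⟩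
    refine ⟨W, hW, hfW, ?_⟩
    rintro y ⟨hyW, hyU⟩
    obtain ⟨z, hz, rfl⟩ := hWs ⟨hyW, Set.image_mono hs hyU⟩
    exact ⟨z, hz.1, rfl⟩
  · have hc : ∀ x : U', ∃ W : Set (Fin n → ℚ_[p]), IsOpen W ∧ f x ∈ W ∧
        W ∩ f '' U ⊆ f '' (U' ∩ U) := fun x => hhom x (hs x.2) U' hU' x.2
    choose W hW hfW hWs using hc
    refine ⟨(⋃ x, W x) ∩ W0, (isOpen_iUnion hW).inter hW0, ?_⟩
    ext y
    constructor
    · rintro ⟨hyM, hyW, hyW0⟩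
      obtain ⟨x, hx⟩ := Set.mem_iUnion.1 hyW
      have hyU : y ∈ f '' U := hMW ▸ ⟨hyM, hyW0⟩
      obtain ⟨z, hz, rfl⟩ := hWs x ⟨hx, hyU⟩
      exact ⟨z, hz.1, rfl⟩
    · rintro ⟨x, hx, rfl⟩
      have h1 : f x ∈ M ∩ W0 := hMW ▸ ⟨x, hs hx, rfl⟩
      exact ⟨h1.1, Set.mem_iUnion.2 ⟨⟨x, hx⟩, hfW ⟨x, hx⟩⟩, h1.2⟩

/-- If `M ⊆ ℚ_p^n` is an analytic submanifold and some `y₀ ∈ M` is not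
very well multiplicatively approximable, then almost every point in a neighbourhood of
`y₀` in `M` (w.r.t. the smooth measure class on `M`) is not VWMA. -/
theorem statement9 (p : ℕ) [Fact p.Prime] (n d : ℕ) (hn : 1 ≤ n)
    (M : Set (Fin n → ℚ_[p])) (hM : IsAnalyticSubmanifold p d n M)
    (y₀ : Fin n → ℚ_[p]) (hy₀ : y₀ ∈ M) (hw : ¬ IsVWMA p y₀) :
    ∃ (U : Set (Fin d → ℚ_[p])) (f : (Fin d → ℚ_[p]) → (Fin n → ℚ_[p])),
      IsChart p d n M U f ∧ y₀ ∈ f '' U ∧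
      ∀ (μ : Measure (Fin d → ℚ_[p])), μ.IsAddHaarMeasure →
        ∀ᵐ x ∂μ, x ∈ U → ¬ IsVWMA p (f x) := by
  obtain ⟨U, f, hch, x0, hx0, rfl⟩ := hM.2 y₀ hy₀
  have hU := hch.1
  have hf := hch.2.1
  obtain ⟨j0, K, hK, hsub, hG⟩ := good_measure p hU x0 hx0 hf
  refine ⟨bb p x0 j0, f, chart_restrict p hch (bb_open p x0 j0) hsub,
    ⟨x0, self_mem_bb p x0 j0, rfl⟩, fun μ hμ => ?_⟩
  exact ae_not_vwma p hf.continuousOn hU x0 j0 K hK hsub μ (hG μ hμ) hw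

end PadicDioph
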